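/- arXiv:1603.09288 — 6 statements merged into one kernel-verified Lean document; each statement's English description precedes it below -/
import Mathlib

section
/- The annihilator ideal 𝔄(G) equals 𝔚_{m−2}(a) := (X^{m−2}, Y − Σ_{ℓ=1}^{k} a(m−ℓ)·X^{m−2−ℓ}, Σ_{ℓ=1}^{p} C(p,ℓ)·X^{ℓ−1}) as ideals of ℤ[X,Y]. In particular, if the defect of G is k = 0 (so the family a of parameters is empty), then 𝔄(G) = 𝔜_{m−2} := (X^{m−2}, Y, Σ_{ℓ=1}^{p} C(p,ℓ)·X^{ℓ−1}). -/
/-!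
Write `n = m - 2` and let `W` be the ideal on the right-hand side. The inclusion `W ≤ A` is a
direct reading of the relations of `G`: since `Ψ (X ^ i) = s_{i+2}`, the generators of `W` are
killed by `Ψ` because of `s_m = 1`, the relation for `[s₂, y]`, and the power relation for `s₂`,
respectively.

For `A ≤ W`, note that modulo `W + (X)` both `Y` and `p` vanish, so every polynomial is congruent
to an integer there, and that integer only matters modulo `p`. Let `f ∈ A` and suppose
`f ≡ X ^ i * g` modulo `W` with `i < n`, `g ≡ c` modulo `W + (X)`. Multiplying by `X ^ (n-1-i)`
gives `c * X ^ (n-1) ∈ A`, and also `p * X ^ (n-1) ∈ A`. If `p ∤ c`, then `X ^ (n-1) ∈ A`, i.e.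
`s_{m-1} = 1`, which is excluded. So `p ∣ c`, hence `g ∈ W + (X)` and `f ≡ X ^ (i+1) * g'`
modulo `W`. After `n` steps `f ∈ W`, because `X ^ n ∈ W` (`le_of_uniserial`).
-/

open MvPolynomial

/-- The paper's commutator `[a,b] = a⁻¹ b⁻¹ a b`. -/
def pcomm {G : Type*} [Group G] (a b : G) : G := a⁻¹ * b⁻¹ * a * b

/-- The iterated commutator `s₂^{(x-1)^i (y-1)^j}`, where `s₂ = [y,x]`,
obtained by commutating `i` times with `x` and `j` times with `y`. -/
def wIter {G : Type*} [Group G] (x y : G) (i j : ℕ) : G :=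
  (fun t => pcomm t x)^[i] ((fun t => pcomm t y)^[j] (pcomm y x))

/-- The higher commutators `s₂ = [y,x]`, `s_j = [s_{j-1}, x]` for `j ≥ 3`. -/
def sSeq {G : Type*} [Group G] (x y : G) (j : ℕ) : G :=
  (fun t => pcomm t x)^[j - 2] (pcomm y x)

/-- Suppose `R / (W + (t))` is a quotient of `ℤ / p` and `t ^ (n + 1) ∈ W`. Then `t ^ n` lies in
every ideal that properly contains `W`; equivalently, an ideal `A ≥ W` avoiding `t ^ n` is
contained in `W`. -/
lemma le_of_uniserial {R : Type*} [CommRing R] (p : ℕ) (hp : p.Prime) (n : ℕ)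
    (W A : Ideal R) (t : R) (hWA : W ≤ A) (htn : t ^ (n + 1) ∈ W) (htA : t ^ n ∉ A)
    (hpW : (p : R) ∈ W ⊔ Ideal.span {t})
    (hint : ∀ g : R, ∃ c : ℤ, g - (c : R) ∈ W ⊔ Ideal.span {t}) : A ≤ W := by
  -- Multiplication by `t ^ n` maps `W + (t)` into `A`.
  have hmulA : ∀ g ∈ W ⊔ Ideal.span {t}, t ^ n * g ∈ A := by
    intro g hg
    obtain ⟨u, hu, v, hv, rfl⟩ := Submodule.mem_sup.1 hg
    obtain ⟨b, rfl⟩ := Ideal.mem_span_singleton'.1 hv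
    have h1 : t ^ n * u ∈ A := A.mul_mem_left _ (hWA hu)
    have h2 : b * t ^ (n + 1) ∈ A := A.mul_mem_left _ (hWA htn)
    have := A.add_mem h1 h2
    convert this using 1
    ring
  intro f hf
  have key : ∀ i, i ≤ n + 1 → ∃ g, f - t ^ i * g ∈ W := by
    intro i
    induction i with
    | zero => exact fun _ => ⟨f, by simp⟩
    | succ i ih =>
      intro hi
      obtain ⟨g, hg⟩ := ih (by omega)
      obtain ⟨c, hc⟩ := hint g
      have htg : t ^ i * g ∈ A := by
        have := A.sub_mem hf (hWA hg)
        simpa using this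
      have hng : t ^ n * g ∈ A := by
        have := A.mul_mem_left (t ^ (n - i)) htg
        rwa [← mul_assoc, ← pow_add, Nat.sub_add_cancel (by omega)] at this
      have hnc : t ^ n * (c : R) ∈ A := by
        have := A.sub_mem hng (hmulA _ hc)
        convert this using 1
        ring
      have hpc : (p : ℤ) ∣ c := by
        by_contra hndvd
        obtain ⟨r, s, hrs⟩ := (Nat.prime_iff_prime_int.1 hp).coprime_iff_not_dvd.2 hndvd
        apply htA
        have h := A.add_mem (A.mul_mem_left (r : R) (hmulA _ hpW)) (A.mul_mem_left (s : R) hnc)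
        have e : (r : R) * p + s * c = 1 := by exact_mod_cast congrArg (Int.cast (R := R)) hrs
        convert h using 1
        linear_combination (-t ^ n) * e
      have hgJ : g ∈ W ⊔ Ideal.span {t} := by
        obtain ⟨d, rfl⟩ := hpc
        have := Ideal.add_mem _ hc (Ideal.mul_mem_left _ (d : R) hpW)
        convert this using 1
        push_cast
        ring
      obtain ⟨u, hu, v, hv, rfl⟩ := Submodule.mem_sup.1 hgJ
      obtain ⟨b, rfl⟩ := Ideal.mem_span_singleton'.1 hv
      refine ⟨b, ?_⟩
      have := W.add_mem hg (W.mul_mem_left (t ^ i) hu)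
      convert this using 1
      ring
  obtain ⟨g, hg⟩ := key (n + 1) le_rfl
  have := W.add_mem hg (W.mul_mem_right g htn)
  simpa using this

/-- A map taking sums to products takes finite sums to ordered products; `G` need not be
commutative. -/
lemma map_sum_range_eq_prod {M G : Type*} [AddCommGroup M] [Group G] (Ψ : M → G)
    (hΨ : ∀ f g, Ψ (f + g) = Ψ f * Ψ g) (F : ℕ → M) (n : ℕ) :
    Ψ (∑ i ∈ Finset.range n, F i) = ((List.range n).map fun i => Ψ (F i)).prod := by
  induction n with
  | zero =>
    have := hΨ 0 0
    simpa using this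
  | succ n ih => rw [Finset.sum_range_succ, hΨ, ih, List.range_succ]; simp

lemma map_natCast_mul {R G : Type*} [CommRing R] [Group G] (Ψ : R → G)
    (hΨ : ∀ f g, Ψ (f + g) = Ψ f * Ψ g) (f : R) (n : ℕ) : Ψ ((n : R) * f) = Ψ f ^ n := by
  induction n with
  | zero =>
    have := hΨ 0 0
    simpa using this
  | succ n ih => rw [Nat.cast_succ, add_mul, hΨ, ih, one_mul, pow_succ]

theorem annihilator_maximal_class_pGroup
    {G : Type*} [Group G] [Finite G]
    (p : ℕ) (hp : p.Prime) (m k : ℕ) (hm : 3 ≤ m) (hk : k ≤ m - 4)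
    (x y : G) (w z : ℕ) (a : ℕ → ℕ)
    (hw : w ≤ p - 1) (hz : z ≤ p - 1)
    (ha : ∀ l, 1 ≤ l → l ≤ k → a (m - l) ≤ p - 1)
    (hak : 1 ≤ k → 1 ≤ a (m - k))
    (hcard : Nat.card G = p ^ m)
    (hgen : Subgroup.closure ({x, y} : Set G) = ⊤)
    (hxp : x ^ p = sSeq x y (m - 1) ^ w)
    (hyp : y ^ p * ((List.range (p - 1)).map fun i => sSeq x y (i + 2) ^ p.choose (i + 2)).prod =
      sSeq x y (m - 1) ^ z)
    (hpow : ∀ j, 1 ≤ j → j ≤ m - 2 →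
      sSeq x y (j + 1) ^ p *
        ((List.range (p - 1)).map fun i => sSeq x y (j + i + 2) ^ p.choose (i + 2)).prod = 1)
    (hc2 : pcomm (sSeq x y 2) y =
      ((List.range k).map fun i => sSeq x y (m - (i + 1)) ^ a (m - (i + 1))).prod)
    (hne : ∀ j, 2 ≤ j → j ≤ m - 1 → sSeq x y j ≠ 1)
    (htriv : ∀ j, m ≤ j → sSeq x y j = 1)
    (hmeta : ∀ i j, 2 ≤ i → 2 ≤ j → pcomm (sSeq x y i) (sSeq x y j) = 1)
    (Ψ : MvPolynomial (Fin 2) ℤ → G)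
    (hΨadd : ∀ f g, Ψ (f + g) = Ψ f * Ψ g)
    (hΨmon : ∀ i j : ℕ, Ψ (X 0 ^ i * X 1 ^ j) = wIter x y i j)
    (A : Ideal (MvPolynomial (Fin 2) ℤ))
    (hA : ∀ f, f ∈ A ↔ Ψ f = 1)
    :
    A = Ideal.span {X 0 ^ (m - 2),
      X 1 - ∑ l ∈ Finset.Icc 1 k, C ((a (m - l) : ℤ)) * X 0 ^ (m - 2 - l),
      ∑ l ∈ Finset.Icc 1 p, C ((p.choose l : ℤ)) * X 0 ^ (l - 1)} ∧
    (k = 0 → A = Ideal.span {X 0 ^ (m - 2), X 1,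
      ∑ l ∈ Finset.Icc 1 p, C ((p.choose l : ℤ)) * X 0 ^ (l - 1)}) := by
  have hs : ∀ j, Ψ (X 0 ^ j) = sSeq x y (j + 2) := by
    intro j
    have := hΨmon j 0
    simpa [wIter, sSeq] using this
  have hcs : ∀ c j : ℕ, Ψ (C (c : ℤ) * X 0 ^ j) = sSeq x y (j + 2) ^ c := by
    intro c j
    have : (C (c : ℤ) : MvPolynomial (Fin 2) ℤ) = (c : MvPolynomial (Fin 2) ℤ) := by simp
    rw [this, map_natCast_mul Ψ hΨadd, hs]
  set S : MvPolynomial (Fin 2) ℤ :=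
    ∑ l ∈ Finset.Icc 1 k, C ((a (m - l) : ℤ)) * X 0 ^ (m - 2 - l) with hS
  set T : MvPolynomial (Fin 2) ℤ :=
    ∑ l ∈ Finset.Icc 1 p, C ((p.choose l : ℤ)) * X 0 ^ (l - 1) with hT
  have hp1 : p - 1 + 1 = p := Nat.sub_add_cancel hp.one_lt.le
  have hT' : T = C (p : ℤ) * X 0 ^ 0 +
      ∑ i ∈ Finset.range (p - 1), C ((p.choose (i + 2) : ℕ) : ℤ) * X 0 ^ (i + 1) := by
    rw [hT, ← Finset.Ico_add_one_right_eq_Icc, Finset.sum_Ico_eq_sum_range, Nat.add_sub_cancel]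
    conv_lhs => rw [← hp1]
    rw [Finset.sum_range_succ', hp1, add_comm]
    congr 1
    · simp
    · refine Finset.sum_congr rfl fun i _ => ?_
      rw [show 1 + (i + 1) = i + 2 by ring]
      rfl
  have hS' : S = ∑ i ∈ Finset.range k, C (a (m - (i + 1)) : ℤ) * X 0 ^ (m - 2 - (i + 1)) := by
    rw [hS, ← Finset.Ico_add_one_right_eq_Icc, Finset.sum_Ico_eq_sum_range, Nat.add_sub_cancel]
    refine Finset.sum_congr rfl fun i _ => ?_
    rw [add_comm 1 i]
  have hXA : X 0 ^ (m - 2) ∈ A := by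
    rw [hA, hs]
    exact htriv _ (by omega)
  have hYA : X 1 - S ∈ A := by
    have hΨS : Ψ S = pcomm (sSeq x y 2) y := by
      rw [hc2, hS', map_sum_range_eq_prod Ψ hΨadd]
      congr 1
      refine List.map_congr_left fun i hi => ?_
      have := List.mem_range.1 hi
      rw [hcs, show m - 2 - (i + 1) + 2 = m - (i + 1) by omega]
    have hΨY : Ψ (X 1) = pcomm (sSeq x y 2) y := by
      have := hΨmon 0 1
      simpa [wIter, sSeq] using this
    have := hΨadd (X 1 - S) S
    rw [sub_add_cancel, hΨS, hΨY] at this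
    rw [hA]
    exact right_eq_mul.1 this
  have hTA : T ∈ A := by
    rw [hA, hT', hΨadd, hcs, map_sum_range_eq_prod Ψ hΨadd]
    rw [← hpow 1 le_rfl (by omega)]
    congr 2
    refine List.map_congr_left fun i _ => ?_
    rw [hcs, show i + 1 + 2 = 1 + i + 2 by ring]
  have hmain : A = Ideal.span {X 0 ^ (m - 2), X 1 - S, T} := by
    have hWA : Ideal.span {X 0 ^ (m - 2), X 1 - S, T} ≤ A := by
      rw [Ideal.span_le]
      rintro f (rfl | rfl | rfl) <;> assumption
    refine le_antisymm ?_ hWA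
    set W : Ideal (MvPolynomial (Fin 2) ℤ) := Ideal.span {X 0 ^ (m - 2), X 1 - S, T} with hW
    have hXJ : X 0 ∈ W ⊔ Ideal.span {X 0} :=
      Ideal.mem_sup_right (Ideal.mem_span_singleton_self _)
    have hYW : X 1 - S ∈ W := Ideal.subset_span (by simp)
    have hTW : T ∈ W := Ideal.subset_span (by simp)
    -- Every exponent in `S` is at least `2`, because `k ≤ m - 4`.
    have hSJ : S ∈ W ⊔ Ideal.span {X 0} := by
      refine Ideal.sum_mem _ fun l hl => Ideal.mul_mem_left _ _ ?_
      have := Finset.mem_Icc.1 hl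
      exact Ideal.pow_mem_of_mem _ hXJ _ (by omega)
    have hYJ : X 1 ∈ W ⊔ Ideal.span {X 0} := by
      have := Ideal.add_mem _ (Ideal.mem_sup_left hYW) hSJ
      rwa [sub_add_cancel] at this
    refine le_of_uniserial p hp (m - 3) W A (X 0) hWA ?_ ?_ ?_ ?_
    · rw [show m - 3 + 1 = m - 2 by omega]
      exact Ideal.subset_span (by simp)
    · rw [hA, hs, show m - 3 + 2 = m - 1 by omega]
      exact hne _ (by omega) le_rfl
    · have h1 : ∑ i ∈ Finset.range (p - 1),
          C ((p.choose (i + 2) : ℕ) : ℤ) * X 0 ^ (i + 1) ∈ W ⊔ Ideal.span {X 0} :=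
        Ideal.sum_mem _ fun l _ => Ideal.mul_mem_left _ _
          (Ideal.pow_mem_of_mem _ hXJ _ (by omega))
      have h2 := Ideal.sub_mem _ (Ideal.mem_sup_left hTW) h1
      rw [hT', add_sub_cancel_right] at h2
      simpa using h2
    · intro g
      induction g using MvPolynomial.induction_on with
      | C c => exact ⟨c, by simp⟩
      | add f g hf hg =>
        obtain ⟨c, hc⟩ := hf
        obtain ⟨d, hd⟩ := hg
        refine ⟨c + d, ?_⟩
        have := Ideal.add_mem _ hc hd
        convert this using 1
        push_cast
        ring
      | mul_X f i _ =>
        refine ⟨0, ?_⟩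
        rw [Int.cast_zero, sub_zero]
        refine Ideal.mul_mem_left _ _ ?_
        fin_cases i
        · exact hXJ
        · exact hYJ
  refine ⟨hmain, fun hk0 => ?_⟩
  have hS0 : S = 0 := by rw [hS', hk0]; simp
  rwa [hS0, sub_zero] at hmain
end

section
/- For each integer 0 ≤ j ≤ μ−1, the additive order of the residue class of X^j in the quotient ring ℤ[X,Y]/𝔄 is p^{q+1}, where q ≥ 0 and 0 ≤ r < p−1 are the unique quotient and remainder of the Euclidean division (μ−1) − j = q·(p−1) + r. Moreover, the residue classes of the system (1, X, X², …, X^{p−2}) if μ ≥ p−1, respectively (1, X, X², …, X^{μ−1}) if μ < p−1, form a basis of the additive group underlying ℤ[X,Y]/𝔄 (the quotient is the internal direct sum of the cyclic subgroups they generate). -/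
/-!
Write `x` for the class of `X` in the quotient `R`. Modulo `p` every coefficient of the trace
polynomial except the leading one vanishes, and its constant term is exactly `p`; as `x` is
nilpotent, the relation `T_p(x) = 0` therefore reads `p = v * x ^ (p - 1)` with `v` a unit of `R`
(`exists_unit_mul_pow`). Hence `p ^ k * x ^ j` is associated to `x ^ (j + k * (p - 1))`, and all
orders follow once `x ^ (μ - 1) ≠ 0` is known (`X_pow_notMem`): an identity
`X ^ n = a * X ^ (n + 1) + b * T_p` in `ℤ[X]` can be divided by `X` until `n = 0`, where comparing
constant terms gives `p ∣ 1`.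

The powers `x ^ i` with `i < min (p - 1) μ` generate because `T_p` is monic of degree `p - 1` and
`x ^ μ = 0` (`exists_aeval_eq_sum`). The sum of the cyclic subgroups is direct because multiples of
`x ^ i` have their `x`-adic valuations congruent to `i` modulo `p - 1`: in a vanishing sum, no term
can be alone in having the least valuation (`exists_pow_dvd_coeff`).
-/

namespace TraceQuotient

/-! ### Powers of a nilpotent `x` with `p = v * x ^ (p - 1)` -/

section Nilpotent

variable {R : Type*} [CommRing R]

/-- A root `x` of the trace polynomial which is nilpotent satisfies `p ~ x ^ (p - 1)`. -/
lemma exists_unit_mul_pow {p : ℕ} (hp : p.Prime) {x : R} (hx : IsNilpotent x)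
    (hT : ∑ l ∈ Finset.Icc 1 p, (p.choose l : R) * x ^ (l - 1) = 0) :
    ∃ v : Rˣ, (p : R) = v * x ^ (p - 1) := by
  have hdvd : ∀ k, ∃ d : ℕ, k + 2 < p → p.choose (k + 2) = p * d := fun k => by
    by_cases h : k + 2 < p
    · obtain ⟨d, hd⟩ := hp.dvd_choose_self (by omega : k + 2 ≠ 0) h
      exact ⟨d, fun _ => hd⟩
    · exact ⟨0, fun h' => absurd h' h⟩
  choose d hd using hdvd
  obtain ⟨n, rfl⟩ : ∃ n, p = n + 2 := ⟨p - 2, by have := hp.two_le; omega⟩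
  have hsplit : ((n + 2 : ℕ) : R) * (1 + x * ∑ k ∈ Finset.range n, (d k : R) * x ^ k)
      + x ^ (n + 1) = 0 := by
    rw [← hT, ← Finset.Ico_add_one_right_eq_Icc, Finset.sum_Ico_eq_sum_range,
      show n + 2 + 1 - 1 = n + 1 + 1 by omega, Finset.sum_range_succ, Finset.sum_range_succ']
    have hterm : ∀ k ∈ Finset.range n,
        ((n + 2).choose (1 + (k + 1)) : R) * x ^ (1 + (k + 1) - 1)
          = ((n + 2 : ℕ) : R) * (x * ((d k : R) * x ^ k)) := fun k hk => by
      rw [show 1 + (k + 1) = k + 2 by omega, hd k (by have := Finset.mem_range.1 hk; omega)]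
      rw [show k + 2 - 1 = k + 1 by omega]
      push_cast
      ring
    rw [Finset.sum_congr rfl hterm, ← Finset.mul_sum, ← Finset.mul_sum,
      show 1 + (n + 1) = n + 2 by omega]
    simp
    ring
  obtain ⟨u, hu⟩ : IsUnit (1 + x * ∑ k ∈ Finset.range n, (d k : R) * x ^ k) :=
    (Commute.isNilpotent_mul_right (Commute.all _ _) hx).isUnit_one_add
  refine ⟨-u⁻¹, ?_⟩
  rw [← hu] at hsplit
  have h := eq_neg_of_add_eq_zero_left hsplit
  rw [show n + 2 - 1 = n + 1 by omega]
  calc ((n + 2 : ℕ) : R) = ((n + 2 : ℕ) : R) * u * (u⁻¹ : Rˣ) := by simp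
    _ = _ := by rw [h]; push_cast; ring

variable {p μ : ℕ} {x : R} {v : Rˣ}

lemma pow_mul_pow (hv : (p : R) = v * x ^ (p - 1)) (k j : ℕ) :
    (p : R) ^ k * x ^ j = (v ^ k : Rˣ) * x ^ (k * (p - 1) + j) := by
  rw [hv, mul_pow, ← pow_mul, pow_add, mul_comm k (p - 1)]
  push_cast
  ring

lemma pow_ne_zero_of_lt (hne : x ^ (μ - 1) ≠ 0) {n : ℕ} (hn : n < μ) : x ^ n ≠ 0 :=
  fun h => hne (pow_eq_zero_of_le (by omega) h)

lemma addOrderOf_pow (hp : p.Prime) (hv : (p : R) = v * x ^ (p - 1)) (hμ : 1 ≤ μ)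
    (h0 : x ^ μ = 0) (hne : x ^ (μ - 1) ≠ 0) {j : ℕ} (hj : j ≤ μ - 1) :
    addOrderOf (x ^ j) = p ^ ((μ - 1 - j) / (p - 1) + 1) := by
  have := Fact.mk hp
  have hpos : 0 < p - 1 := by have := hp.two_le; omega
  apply addOrderOf_eq_prime_pow
  · rw [nsmul_eq_mul, Nat.cast_pow, pow_mul_pow hv, Units.mul_right_eq_zero]
    have := Nat.div_mul_le_self (μ - 1 - j) (p - 1)
    exact pow_ne_zero_of_lt hne (by omega)
  · rw [nsmul_eq_mul, Nat.cast_pow, pow_mul_pow hv, Units.mul_right_eq_zero]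
    have := Nat.lt_div_mul_add (a := μ - 1 - j) hpos
    exact pow_eq_zero_of_le (by rw [add_mul]; omega) h0

/-- A nonzero power of a nilpotent `x` is not a multiple of the next power. -/
lemma not_pow_succ_dvd (hx : IsNilpotent x) {n : ℕ} (hn : x ^ n ≠ 0) : ¬ x ^ (n + 1) ∣ x ^ n := by
  rintro ⟨y, hy⟩
  have hu : IsUnit (1 - x * y) :=
    (Commute.isNilpotent_mul_right (Commute.all _ _) hx).isUnit_one_sub
  apply hn
  rw [← hu.mul_left_eq_zero]
  linear_combination hy

/-- In a vanishing combination of the `x ^ i`, `i < p - 1`, each coefficient is so divisible by `p`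
that its term is a multiple of `x ^ n`, for every `n ≤ μ`. Induction on `n`: among terms divisible
by `x ^ n`, only the one with `i ≡ n` modulo `p - 1` can fail to be divisible by `x ^ (n + 1)`, and
it is minus the sum of the others. -/
lemma exists_pow_dvd_coeff (hp : p.Prime) (hv : (p : R) = v * x ^ (p - 1))
    (h0 : x ^ μ = 0) (hne : x ^ (μ - 1) ≠ 0) {m : ℕ} (hm : m ≤ p - 1) (c : ℕ → ℤ)
    (hc : ∑ i ∈ Finset.range m, (c i : R) * x ^ i = 0) (n : ℕ) (hn : n ≤ μ) :
    ∀ i < m, ∃ k : ℕ, (p : ℤ) ^ k ∣ c i ∧ n ≤ k * (p - 1) + i := by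
  have hpos : 0 < p - 1 := by have := hp.two_le; omega
  induction n with
  | zero => exact fun i _ => ⟨0, by simp, by omega⟩
  | succ n ih =>
    intro i hi
    have ih := ih (by omega)
    obtain ⟨k, ⟨d, hd⟩, hk⟩ := ih i hi
    rcases hk.lt_or_eq with hlt | heq
    · exact ⟨k, ⟨d, hd⟩, hlt⟩
    have hothers : ∀ i' ∈ (Finset.range m).erase i, x ^ (n + 1) ∣ (c i' : R) * x ^ i' := by
      intro i' hi'
      obtain ⟨hne', hi'⟩ := Finset.mem_erase.1 hi'
      have hi' := Finset.mem_range.1 hi'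
      obtain ⟨k', ⟨d', hd'⟩, hk'⟩ := ih i' hi'
      have hn' : n ≠ k' * (p - 1) + i' := by
        intro h
        have h1 : n % (p - 1) = i := by
          rw [heq, Nat.mul_add_mod_self_right, Nat.mod_eq_of_lt (by omega)]
        have h2 : n % (p - 1) = i' := by
          rw [h, Nat.mul_add_mod_self_right, Nat.mod_eq_of_lt (by omega)]
        exact hne' (h2.symm.trans h1)
      have hrw : (c i' : R) * x ^ i' = (d' : R) * ((p : R) ^ k' * x ^ i') := by
        rw [hd']; push_cast; ring
      rw [hrw, pow_mul_pow hv]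
      exact ((pow_dvd_pow x (by omega)).mul_left _).mul_left _
    have hterm : x ^ (n + 1) ∣ (d : R) * x ^ n := by
      have h1 := Finset.add_sum_erase _ (fun i => (c i : R) * x ^ i) (Finset.mem_range.2 hi)
      rw [hc] at h1
      have h2 : x ^ (n + 1) ∣ (c i : R) * x ^ i := by
        have := Finset.dvd_sum hothers
        exact (dvd_add_left this).1 (h1 ▸ dvd_zero _)
      have hrw : (c i : R) * x ^ i = (v ^ k : Rˣ) * ((d : R) * x ^ n) := by
        rw [mul_left_comm, heq, ← pow_mul_pow hv, hd]; push_cast; ring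
      rw [hrw] at h2
      exact (Units.dvd_mul_left).1 h2
    have hpd : (p : ℤ) ∣ d := by
      -- Otherwise `1 = a * p + b * d`, and as `x ∣ p`, `x ^ (n + 1)` would divide `x ^ n`.
      by_contra hnd
      obtain ⟨a, b, hab⟩ := ((Nat.prime_iff_prime_int.1 hp).coprime_iff_not_dvd.2 hnd)
      have hpx : x ^ (n + 1) ∣ (p : R) * x ^ n := by
        have := pow_mul_pow hv 1 n
        rw [pow_one] at this
        rw [this]
        exact (pow_dvd_pow x (by omega)).mul_left _
      have habR : (a : R) * p + b * d = 1 := by exact_mod_cast congrArg (Int.cast (R := R)) hab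
      refine not_pow_succ_dvd ⟨μ, h0⟩ (pow_ne_zero_of_lt hne (by omega : n < μ)) ?_
      have : x ^ n = a * ((p : R) * x ^ n) + b * ((d : R) * x ^ n) := by
        linear_combination (-x ^ n) * habR
      rw [this]
      exact dvd_add (hpx.mul_left _) (hterm.mul_left _)
    refine ⟨k + 1, ?_, ?_⟩
    · rw [hd, pow_succ]; exact mul_dvd_mul_left _ hpd
    · rw [add_mul]; omega

end Nilpotent

/-! ### The trace polynomial over `ℤ` -/

section IntegerPolynomials

open Polynomial

/-- The trace polynomial `((1 + X) ^ p - 1) / X` in one variable. -/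
noncomputable def trace (p : ℕ) : ℤ[X] :=
  ∑ l ∈ Finset.Icc 1 p, Polynomial.C (p.choose l : ℤ) * Polynomial.X ^ (l - 1)

lemma trace_succ (n : ℕ) : trace (n + 1) = Polynomial.X ^ n +
    ∑ k ∈ Finset.range n, Polynomial.C ((n + 1).choose (k + 1) : ℤ) * Polynomial.X ^ k := by
  rw [trace, ← Finset.Ico_add_one_right_eq_Icc, Finset.sum_Ico_eq_sum_range,
    show n + 1 + 1 - 1 = n + 1 by omega, Finset.sum_range_succ, add_comm]
  simp [add_comm 1]

lemma degree_lower_lt (n : ℕ) : (∑ k ∈ Finset.range n,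
    Polynomial.C ((n + 1).choose (k + 1) : ℤ) * Polynomial.X ^ k).degree < (n : WithBot ℕ) := by
  rw [← Polynomial.mem_degreeLT]
  refine Submodule.sum_mem _ fun k hk => ?_
  rw [Polynomial.mem_degreeLT]
  exact (Polynomial.degree_C_mul_X_pow_le _ _).trans_lt (by exact_mod_cast Finset.mem_range.1 hk)

lemma trace_monic {p : ℕ} (hp : p.Prime) : (trace p).Monic := by
  obtain ⟨n, rfl⟩ : ∃ n, p = n + 1 := ⟨p - 1, by have := hp.two_le; omega⟩
  rw [trace_succ]
  exact Polynomial.monic_X_pow_add (degree_lower_lt n)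

lemma degree_trace {p : ℕ} (hp : p.Prime) : (trace p).degree = ((p - 1 : ℕ) : WithBot ℕ) := by
  obtain ⟨n, rfl⟩ : ∃ n, p = n + 1 := ⟨p - 1, by have := hp.two_le; omega⟩
  rw [trace_succ, Polynomial.degree_add_eq_left_of_degree_lt] <;> rw [Polynomial.degree_X_pow]
  · simp
  · exact degree_lower_lt n

lemma trace_coeff_zero {p : ℕ} (hp : p.Prime) : (trace p).coeff 0 = p := by
  obtain ⟨n, rfl⟩ : ∃ n, p = n + 2 := ⟨p - 2, by have := hp.two_le; omega⟩
  rw [trace_succ, Finset.sum_range_succ', Polynomial.coeff_add, Polynomial.coeff_add,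
    Polynomial.finsetSum_coeff]
  simp [Polynomial.coeff_X_pow]
  ring

/-- This is what makes `x ^ (μ - 1)` nonzero in the quotient. -/
lemma X_pow_notMem {p : ℕ} (hp : p.Prime) (n : ℕ) :
    (Polynomial.X : ℤ[X]) ^ n ∉ Ideal.span {Polynomial.X ^ (n + 1), trace p} := by
  have hp0 : (p : ℤ) ≠ 0 := by exact_mod_cast hp.ne_zero
  induction n with
  | zero =>
    rw [Ideal.mem_span_pair]
    rintro ⟨a, b, hab⟩
    have h := congrArg (fun f => Polynomial.coeff f 0) hab
    simp [Polynomial.mul_coeff_zero, trace_coeff_zero hp] at h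
    exact (Nat.prime_iff_prime_int.1 hp).not_isUnit (IsUnit.of_mul_eq_one_right _ h)
  | succ n ih =>
    rw [Ideal.mem_span_pair]
    rintro ⟨a, b, hab⟩
    have h := congrArg (fun f => Polynomial.coeff f 0) hab
    simp [Polynomial.mul_coeff_zero, trace_coeff_zero hp, hp.ne_zero] at h
    obtain ⟨b', rfl⟩ := Polynomial.X_dvd_iff.2 h
    refine ih (Ideal.mem_span_pair.2 ⟨a, b', ?_⟩)
    apply mul_left_cancel₀ (Polynomial.X_ne_zero (R := ℤ))
    linear_combination hab

/-- The remainder modulo the monic polynomial `trace p` has degree less than `p - 1`, and its terms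
of degree at least `μ` vanish at `x`. -/
lemma exists_aeval_eq_sum {R : Type*} [CommRing R] {p μ : ℕ} (hp : p.Prime) {x : R}
    (h0 : x ^ μ = 0) (hT : aeval x (trace p) = 0) (f : ℤ[X]) :
    ∃ c : ℕ → ℤ, aeval x f = ∑ i ∈ Finset.range (min (p - 1) μ), c i • x ^ i := by
  have hmonic := trace_monic hp
  refine ⟨(f %ₘ trace p).coeff, ?_⟩
  have hdeg : (f %ₘ trace p).degree < ((p - 1 : ℕ) : WithBot ℕ) :=
    degree_trace hp ▸ Polynomial.degree_modByMonic_lt f hmonic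
  have hnat : (f %ₘ trace p).natDegree < p - 1 := by
    by_cases h : f %ₘ trace p = 0
    · have := hp.two_le
      rw [h, Polynomial.natDegree_zero]
      omega
    · exact (Polynomial.natDegree_lt_iff_degree_lt h).2 hdeg
  have hmod : aeval x f = aeval x (f %ₘ trace p) := by
    conv_lhs => rw [← Polynomial.modByMonic_add_div f (trace p)]
    simp [hT]
  have hsum : aeval x (f %ₘ trace p)
      = ∑ i ∈ Finset.range (p - 1), (f %ₘ trace p).coeff i • x ^ i := by
    conv_lhs => rw [Polynomial.as_sum_range' (f %ₘ trace p) (p - 1)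
      hnat]
    simp [Polynomial.aeval_monomial]
  rw [hmod, hsum]
  symm
  apply Finset.sum_subset (Finset.range_mono (min_le_left _ _))
  intro i hi hi'
  rw [Finset.mem_range] at hi hi'
  rw [pow_eq_zero_of_le (by omega) h0, smul_zero]

end IntegerPolynomials

end TraceQuotient

/-! ### The quotient of `ℤ[X, Y]` -/


open MvPolynomial

theorem orders_and_basis_of_quotient_by_trace_ideal
    (p : ℕ) (hp : p.Prime) (μ : ℕ) (hμ : 1 ≤ μ)
    (g : Polynomial ℤ) (hg : g.coeff 0 = 0)
    (A : Ideal (MvPolynomial (Fin 2) ℤ))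
    (hA : A = Ideal.span {X 0 ^ μ,
      ∑ l ∈ Finset.Icc 1 p, C ((p.choose l : ℤ)) * X 0 ^ (l - 1),
      X 1 - Polynomial.eval₂ C (X 0) g}) :
    (∀ j, j ≤ μ - 1 →
      addOrderOf (Ideal.Quotient.mk A (X 0 ^ j)) = p ^ ((μ - 1 - j) / (p - 1) + 1)) ∧
    (∀ q : MvPolynomial (Fin 2) ℤ ⧸ A, ∃ c : ℕ → ℤ,
      q = ∑ i ∈ Finset.range (min (p - 1) μ), c i • Ideal.Quotient.mk A (X 0 ^ i)) ∧
    (∀ c : ℕ → ℤ,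
      ∑ i ∈ Finset.range (min (p - 1) μ), c i • Ideal.Quotient.mk A (X 0 ^ i) = 0 →
      ∀ i ∈ Finset.range (min (p - 1) μ), c i • Ideal.Quotient.mk A (X 0 ^ i) = 0) := by
  set x : MvPolynomial (Fin 2) ℤ ⧸ A := Ideal.Quotient.mk A (X 0) with hx
  have hmem : ∀ f ∈ ({X 0 ^ μ, ∑ l ∈ Finset.Icc 1 p, C ((p.choose l : ℤ)) * X 0 ^ (l - 1),
      X 1 - Polynomial.eval₂ C (X 0) g} : Set (MvPolynomial (Fin 2) ℤ)),
      Ideal.Quotient.mk A f = 0 := fun f hf =>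
    Ideal.Quotient.eq_zero_iff_mem.2 (hA ▸ Ideal.subset_span hf)
  have h0 : x ^ μ = 0 := by
    rw [hx, ← map_pow]; exact hmem _ (by simp)
  have hC : ∀ n : ℤ, Ideal.Quotient.mk A (C n) = (n : MvPolynomial (Fin 2) ℤ ⧸ A) := fun n => by
    simp
  have hT : ∑ l ∈ Finset.Icc 1 p, (p.choose l : MvPolynomial (Fin 2) ℤ ⧸ A) * x ^ (l - 1) = 0 := by
    have := hmem (∑ l ∈ Finset.Icc 1 p, C ((p.choose l : ℤ)) * X 0 ^ (l - 1)) (by simp)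
    rw [map_sum] at this
    rw [← this]
    refine Finset.sum_congr rfl fun l _ => ?_
    rw [map_mul, hC, map_pow, Int.cast_natCast]
  have hT' : Polynomial.aeval x (TraceQuotient.trace p) = 0 := by
    rw [← hT, TraceQuotient.trace, map_sum]
    refine Finset.sum_congr rfl fun l _ => ?_
    simp
  have hY : Ideal.Quotient.mk A (X 1) = Polynomial.aeval x g := by
    have := hmem (X 1 - Polynomial.eval₂ C (X 0) g) (by simp)
    rw [map_sub, sub_eq_zero] at this
    rw [this, Polynomial.hom_eval₂, Polynomial.aeval_def]
    congr 1
  have hne : x ^ (μ - 1) ≠ 0 := by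
    intro h
    rw [hx, ← map_pow, Ideal.Quotient.eq_zero_iff_mem] at h
    -- The substitution `Y ↦ g(X)` carries the ideal into `(X ^ μ, T_p) ⊆ ℤ[X]`.
    let φ : MvPolynomial (Fin 2) ℤ →+* Polynomial ℤ :=
      eval₂Hom Polynomial.C ![Polynomial.X, g]
    have hle : A ≤ (Ideal.span {Polynomial.X ^ μ, TraceQuotient.trace p}).comap φ := by
      rw [hA, Ideal.span_le]
      rintro f (rfl | rfl | rfl)
      · rw [SetLike.mem_coe, Ideal.mem_comap]
        apply Ideal.subset_span
        simp [φ]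
      · rw [SetLike.mem_coe, Ideal.mem_comap]
        apply Ideal.subset_span
        right
        simp [φ, TraceQuotient.trace]
      · have : φ (X 1 - Polynomial.eval₂ C (X 0) g) = 0 := by
          rw [map_sub, Polynomial.hom_eval₂, sub_eq_zero]
          have h1 : φ.comp C = Polynomial.C := RingHom.ext_int _ _
          rw [h1]
          simp [φ]
        rw [SetLike.mem_coe, Ideal.mem_comap, this]
        exact zero_mem _
    have h' : φ (X 0 ^ (μ - 1)) ∈ Ideal.span {Polynomial.X ^ μ, TraceQuotient.trace p} := hle h
    apply TraceQuotient.X_pow_notMem hp (μ - 1)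
    rw [Nat.sub_add_cancel hμ]
    simpa [φ] using h'
  obtain ⟨v, hv⟩ := TraceQuotient.exists_unit_mul_pow hp ⟨μ, h0⟩ hT
  simp only [map_pow, ← hx]
  refine ⟨fun j hj => TraceQuotient.addOrderOf_pow hp hv hμ h0 hne hj, fun q => ?_,
    fun c hc i hi => ?_⟩
  · obtain ⟨f, rfl⟩ := Ideal.Quotient.mk_surjective q
    obtain ⟨f', hf'⟩ : ∃ f' : Polynomial ℤ, Ideal.Quotient.mk A f = Polynomial.aeval x f' := by
      induction f using MvPolynomial.induction_on with
      | C a => exact ⟨Polynomial.C a, by simp⟩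
      | add f₁ f₂ h₁ h₂ =>
        obtain ⟨a, ha⟩ := h₁
        obtain ⟨b, hb⟩ := h₂
        exact ⟨a + b, by rw [map_add, map_add, ha, hb]⟩
      | mul_X f i h =>
        obtain ⟨a, ha⟩ := h
        fin_cases i
        · exact ⟨a * Polynomial.X, by rw [map_mul, map_mul, ha, Polynomial.aeval_X]; rfl⟩
        · exact ⟨a * g, by rw [map_mul, map_mul, ha, ← hY]; rfl⟩
    rw [hf']
    exact TraceQuotient.exists_aeval_eq_sum hp h0 hT' f'
  · simp only [zsmul_eq_mul] at hc ⊢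
    obtain ⟨k, ⟨d, hd⟩, hk⟩ := TraceQuotient.exists_pow_dvd_coeff hp hv h0 hne
      (min_le_left _ _) c hc μ le_rfl i (Finset.mem_range.1 hi)
    have : (c i : MvPolynomial (Fin 2) ℤ ⧸ A) * x ^ i = d * ((p : _) ^ k * x ^ i) := by
      rw [hd]; push_cast; ring
    rw [this, TraceQuotient.pow_mul_pow hv, pow_eq_zero_of_le hk h0, mul_zero, mul_zero]
end

section
/- The commutator subgroup G' of G is isomorphic to the nearly homocyclic abelian p-group of order p^{m−2}: G' ≅ ℤ[X,Y]/𝔄(G) ≅ A(p, m−2), independently of the defect k and of the parameters w, z, a(m−1), …, a(m−k). -/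
/-!
Write `s n = s_{n+2}` and `S = ⟨s 0, s 1, …⟩`. The subgroup `S` is abelian, and it is normal:
`x` sends `s_j` to `s_j s_{j+1}` by conjugation, and since `x^y = x s₂⁻¹` and `S` is abelian,
`s_{j+1}^y = [s_j^y, x]`, so the case of `s₂` propagates to all `s_j`. As `x` and `y` commute
modulo `S`, this gives `G' = S`; moreover `x^p, y^p ∈ S`, so `[G : S] ≤ p²` and
`|S| ≥ p^(m-2)`. The monomials of `ℤ[X,Y]` are mapped by `Ψ` into `S`, and the powers of `X`
already hit the generators `s n`, so `ℤ[X,Y]/𝔄(G) ≅ S` as well.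

It remains to identify `S`, written additively, from the relations
`p s_n + ∑_{l=2}^{p} C(p,l) s_{n+l-1} = 0` and `s_n = 0` for `n ≥ μ = m - 2`
(`nonempty_addEquiv_nearlyHomocyclic`). The coefficient of `s_{n+p-1}` is `1`, so
`s_0, …, s_{p-2}` generate. The other binomials are divisible by `p`, so multiplication by `p`
maps `D_n = ⟨s_n, s_{n+1}, …⟩` into `D_{n+p-1}`; hence `p^e s_i = 0` once `i + e(p-1) ≥ μ`.
This yields a surjection from `A(p, μ)` onto `S`, and comparing orders shows it is bijective.
-/

open MvPolynomial

/-- The nearly homocyclic abelian `p`-group `A(p,μ)` of order `p^μ`: writing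
`μ = q(p-1) + r` with `0 ≤ r < p-1`, it has `r` cyclic factors of order `p^{q+1}` and
`p-1-r` factors of order `p^q` (trivial factors `ZMod 1` being allowed). -/
abbrev NearlyHomocyclic (p μ : ℕ) : Type :=
  (i : Fin (p - 1)) → ZMod (p ^ ((μ + p - 2 - (i : ℕ)) / (p - 1)))

/-! ### The order of `A(p, μ)` -/

/-- Hermite's identity at integer arguments. -/
lemma sum_range_add_div (n μ : ℕ) (hn : 0 < n) :
    ∑ i ∈ Finset.range n, (μ + i) / n = μ := by
  induction μ with
  | zero =>
    refine Finset.sum_eq_zero fun i hi => ?_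
    rw [zero_add]
    exact Nat.div_eq_of_lt (Finset.mem_range.1 hi)
  | succ μ ih =>
    have h1 := Finset.sum_range_succ (fun i => (μ + i) / n) n
    have h2 := Finset.sum_range_succ' (fun i => (μ + i) / n) n
    have h3 : (μ + n) / n = μ / n + 1 := Nat.add_div_right μ hn
    have h4 : ∀ i, μ + 1 + i = μ + (i + 1) := fun i => by omega
    simp only [h4]
    rw [h1, ih] at h2
    simp only [add_zero] at h2
    omega

lemma card_nearlyHomocyclic (p μ : ℕ) (hp : p.Prime) :
    Nat.card (NearlyHomocyclic p μ) = p ^ μ := by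
  have h2 := hp.two_le
  rw [Nat.card_pi]
  simp only [Nat.card_zmod]
  rw [Finset.prod_pow_eq_pow_sum]
  congr 1
  rw [Fin.sum_univ_eq_sum_range (fun i => (μ + p - 2 - i) / (p - 1)) (p - 1),
    ← Finset.sum_range_reflect]
  refine Eq.trans (Finset.sum_congr rfl fun i hi => ?_)
    (sum_range_add_div (p - 1) μ (by omega))
  have := Finset.mem_range.1 hi
  congr 1
  omega

/-! ### Abelian groups generated by a sequence with binomial relations -/

section Sequence

variable {M : Type*} [AddCommGroup M] (p μ : ℕ) (s : ℕ → M)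

/-- The tail subgroup generated by all `s i` with `n ≤ i`. -/
def tailSubgroup (n : ℕ) : AddSubgroup M := AddSubgroup.closure (s '' Set.Ici n)

lemma mem_tailSubgroup {n i : ℕ} (h : n ≤ i) : s i ∈ tailSubgroup s n :=
  AddSubgroup.subset_closure ⟨i, h, rfl⟩

lemma tailSubgroup_anti {n i : ℕ} (h : n ≤ i) : tailSubgroup s i ≤ tailSubgroup s n :=
  AddSubgroup.closure_mono (Set.image_mono (Set.Ici_subset_Ici.2 h))

variable {p μ s}

/-- The relation at `n`, with its top term, of coefficient `1`, split off. -/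
lemma relation_split (hp : p.Prime)
    (hrel : ∀ n, p • s n + ∑ i ∈ Finset.range (p - 1), p.choose (i + 2) • s (n + i + 1) = 0)
    (n : ℕ) :
    p • s n + ∑ i ∈ Finset.range (p - 2), p.choose (i + 2) • s (n + i + 1)
      + s (n + (p - 1)) = 0 := by
  have h2 := hp.two_le
  have h := hrel n
  rw [show p - 1 = p - 2 + 1 by omega, Finset.sum_range_succ] at h
  rw [show p - 2 + 2 = p by omega, Nat.choose_self, one_smul, ← add_assoc] at h
  rw [show n + (p - 1) = n + (p - 2) + 1 by omega]
  exact h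

/-- All binomials in the relation at `n` except the last are divisible by `p`, so multiplication
by `p` raises the index by `p - 1`, not merely by `1`. -/
lemma smul_mem_tailSubgroup (hp : p.Prime) (hzero : ∀ n, μ ≤ n → s n = 0)
    (hrel : ∀ n, p • s n + ∑ i ∈ Finset.range (p - 1), p.choose (i + 2) • s (n + i + 1) = 0)
    (n : ℕ) : p • s n ∈ tailSubgroup s (n + (p - 1)) := by
  -- downward induction on `n`, starting from the range where `s` vanishes
  induction hd : μ - n using Nat.strong_induction_on generalizing n with
  | _ d ih =>
    by_cases hn : μ ≤ n
    · rw [hzero n hn, smul_zero]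
      exact zero_mem _
    have h := relation_split hp hrel n
    rw [add_assoc, add_eq_zero_iff_eq_neg] at h
    rw [h]
    refine neg_mem (add_mem (sum_mem fun i hi => ?_) (mem_tailSubgroup s le_rfl))
    have hi' := Finset.mem_range.1 hi
    obtain ⟨c, hc⟩ := hp.dvd_choose_self (k := i + 2) (by omega) (by omega)
    rw [hc, mul_comm, mul_smul]
    refine nsmul_mem (tailSubgroup_anti s ?_ (ih (μ - (n + i + 1)) (by omega) (n + i + 1) rfl)) c
    omega

lemma pow_smul_mem_tailSubgroup (hp : p.Prime) (hzero : ∀ n, μ ≤ n → s n = 0)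
    (hrel : ∀ n, p • s n + ∑ i ∈ Finset.range (p - 1), p.choose (i + 2) • s (n + i + 1) = 0)
    (n e : ℕ) : p ^ e • s n ∈ tailSubgroup s (n + e * (p - 1)) := by
  have step : ∀ n t, t ∈ tailSubgroup s n → p • t ∈ tailSubgroup s (n + (p - 1)) := by
    intro n t ht
    induction ht using AddSubgroup.closure_induction with
    | mem t ht =>
      obtain ⟨i, hi, rfl⟩ := ht
      refine tailSubgroup_anti s ?_ (smul_mem_tailSubgroup hp hzero hrel i)
      have : n ≤ i := hi
      omega
    | zero => rw [smul_zero]; exact zero_mem _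
    | add a b _ _ ha hb => rw [smul_add]; exact add_mem ha hb
    | neg a _ ha => rw [smul_neg]; exact neg_mem ha
  induction e with
  | zero => simpa using mem_tailSubgroup s (le_refl n)
  | succ e ih =>
    have := step _ _ ih
    rw [← mul_smul, ← pow_succ'] at this
    convert this using 2
    ring

lemma pow_smul_eq_zero (hp : p.Prime) (hzero : ∀ n, μ ≤ n → s n = 0)
    (hrel : ∀ n, p • s n + ∑ i ∈ Finset.range (p - 1), p.choose (i + 2) • s (n + i + 1) = 0)
    (n e : ℕ) (h : μ ≤ n + e * (p - 1)) : p ^ e • s n = 0 := by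
  have h1 := pow_smul_mem_tailSubgroup hp hzero hrel n e
  have h2 : tailSubgroup s (n + e * (p - 1)) ≤ ⊥ := by
    refine (AddSubgroup.closure_le _).2 ?_
    rintro _ ⟨i, hi, rfl⟩
    exact hzero i (h.trans hi)
  exact (AddSubgroup.mem_bot).1 (h2 h1)

/-- The first `p - 1` terms generate all others, as the relations are monic in `s (n + p - 1)`. -/
lemma mem_of_initial_mem (hp : p.Prime)
    (hrel : ∀ n, p • s n + ∑ i ∈ Finset.range (p - 1), p.choose (i + 2) • s (n + i + 1) = 0)
    (H : AddSubgroup M) (hH : ∀ i, i < p - 1 → s i ∈ H) (n : ℕ) : s n ∈ H := by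
  have h2 := hp.two_le
  induction n using Nat.strong_induction_on with
  | _ n ih =>
    by_cases hn : n < p - 1
    · exact hH n hn
    have h := relation_split hp hrel (n - (p - 1))
    rw [show n - (p - 1) + (p - 1) = n by omega, add_eq_zero_iff_neg_eq] at h
    rw [← h]
    refine neg_mem (add_mem (nsmul_mem (ih _ (by omega)) _) (sum_mem fun i hi => ?_))
    have := Finset.mem_range.1 hi
    exact nsmul_mem (ih _ (by omega)) _

/-- A finite abelian group of order at least `p ^ μ`, generated by a sequence which vanishes from
index `μ` on and satisfies the relations `∑_{l=1}^{p} C(p,l) s_{n+l-1} = 0`, is isomorphic to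
`A(p, μ)`. -/
theorem nonempty_addEquiv_nearlyHomocyclic (hp : p.Prime) (hzero : ∀ n, μ ≤ n → s n = 0)
    (hrel : ∀ n, p • s n + ∑ i ∈ Finset.range (p - 1), p.choose (i + 2) • s (n + i + 1) = 0)
    (hgen : AddSubgroup.closure (Set.range s) = ⊤) (hcard : p ^ μ ≤ Nat.card M) :
    Nonempty (M ≃+ NearlyHomocyclic p μ) := by
  have h2 := hp.two_le
  have hann : ∀ i : Fin (p - 1),
      (zmultiplesHom M (s i)) ((p ^ ((μ + p - 2 - (i : ℕ)) / (p - 1)) : ℕ) : ℤ) = 0 := by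
    intro i
    rw [zmultiplesHom_apply, natCast_zsmul]
    apply pow_smul_eq_zero hp hzero hrel
    have hi := i.2
    have h3 := Nat.div_add_mod (μ + p - 2 - (i : ℕ)) (p - 1)
    have h4 := Nat.mod_lt (μ + p - 2 - (i : ℕ)) (show 0 < p - 1 by omega)
    rw [mul_comm] at h3
    omega
  -- `Φ` sends the `i`-th standard generator to `s i`
  let Φ : NearlyHomocyclic p μ →+ M :=
    ∑ i : Fin (p - 1), (ZMod.lift _ ⟨zmultiplesHom M (s i), hann i⟩).comp
      (Pi.evalAddMonoidHom _ i)
  have hΦ : ∀ i : Fin (p - 1), Φ (Pi.single i 1) = s i := by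
    intro i
    simp only [Φ, AddMonoidHom.finsetSum_apply, AddMonoidHom.comp_apply,
      Pi.evalAddMonoidHom_apply]
    rw [Finset.sum_eq_single i]
    · rw [Pi.single_eq_same]
      have := ZMod.lift_coe (p ^ ((μ + p - 2 - (i : ℕ)) / (p - 1)))
        ⟨zmultiplesHom M (s i), hann i⟩ 1
      simpa using this
    · intro j _ hj
      rw [Pi.single_eq_of_ne hj, map_zero]
    · simp
  have hsurj : Function.Surjective Φ := by
    rw [← AddMonoidHom.range_eq_top, eq_top_iff, ← hgen, AddSubgroup.closure_le]
    rintro _ ⟨n, rfl⟩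
    exact mem_of_initial_mem hp hrel Φ.range (fun i hi => ⟨_, hΦ ⟨i, hi⟩⟩) n
  have : ∀ i : Fin (p - 1), NeZero (p ^ ((μ + p - 2 - (i : ℕ)) / (p - 1))) :=
    fun i => ⟨pow_ne_zero _ hp.ne_zero⟩
  have : Finite (NearlyHomocyclic p μ) := Pi.finite
  have hbij : Function.Bijective Φ :=
    hsurj.bijective_of_nat_card_le (by rw [card_nearlyHomocyclic p μ hp]; exact hcard)
  exact ⟨(AddEquiv.ofBijective Φ hbij).symm⟩

end Sequence

/-! ### The subgroup of higher commutators -/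

section Group

variable {G : Type*} [Group G]

lemma pcomm_mem_of_normal {S : Subgroup G} [hS : S.Normal] {t : G} (ht : t ∈ S) (g : G) :
    pcomm t g ∈ S := by
  have h := S.mul_mem (S.inv_mem ht) (hS.conj_mem t ht g⁻¹)
  simpa [pcomm, mul_assoc] using h

lemma sSeq_succ (x y : G) (n : ℕ) : sSeq x y (n + 3) = pcomm (sSeq x y (n + 2)) x := by
  simp only [sSeq, show n + 3 - 2 = n + 1 by omega, show n + 2 - 2 = n by omega,
    Function.iterate_succ_apply']

lemma commute_of_pcomm_eq_one {a b : G} (h : pcomm a b = 1) : Commute a b := by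
  have h1 : (b * a)⁻¹ * (a * b) = 1 := by
    rw [← h]; simp [pcomm, mul_assoc]
  exact (inv_mul_eq_one.1 h1).symm

lemma pcomm_mem_commutator (a b : G) : pcomm a b ∈ commutator G := by
  have h := Subgroup.commutator_mem_commutator (Subgroup.mem_top a⁻¹) (Subgroup.mem_top b⁻¹)
  rw [commutatorElement_def, inv_inv, inv_inv] at h
  exact h

/-- The subgroup generated by the higher commutators `s₂, s₃, …`. -/
def sSubgroup (x y : G) : Subgroup G := Subgroup.closure (Set.range fun n => sSeq x y (n + 2))

lemma sSeq_mem (x y : G) (j : ℕ) : sSeq x y j ∈ sSubgroup x y := by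
  refine Subgroup.subset_closure ⟨j - 2, ?_⟩
  simp only [sSeq, Nat.add_sub_cancel]

lemma sSubgroup_commute {x y : G}
    (hmeta : ∀ i j, 2 ≤ i → 2 ≤ j → pcomm (sSeq x y i) (sSeq x y j) = 1) {a b : G}
    (ha : a ∈ sSubgroup x y) (hb : b ∈ sSubgroup x y) : a * b = b * a := by
  induction ha, hb using Subgroup.closure_induction₂ with
  | mem a b ha hb =>
    obtain ⟨i, rfl⟩ := ha
    obtain ⟨j, rfl⟩ := hb
    exact commute_of_pcomm_eq_one (hmeta _ _ (by omega) (by omega))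
  | one_left => simp
  | one_right => simp
  | mul_left a b c _ _ _ h1 h2 => exact Commute.mul_left h1 h2
  | mul_right a b c _ _ _ h1 h2 => exact Commute.mul_right h1 h2
  | inv_left a b _ _ h => exact Commute.inv_left h
  | inv_right a b _ _ h => exact Commute.inv_right h

lemma conj_mem_sSubgroup {x y g : G}
    (h : ∀ n, g⁻¹ * sSeq x y (n + 2) * g ∈ sSubgroup x y) {t : G} (ht : t ∈ sSubgroup x y) :
    g⁻¹ * t * g ∈ sSubgroup x y := by
  induction ht using Subgroup.closure_induction with
  | mem t ht =>
    obtain ⟨n, rfl⟩ := ht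
    exact h n
  | one => simp
  | mul a b _ _ ha hb =>
    have := mul_mem ha hb
    simpa [mul_assoc] using this
  | inv a _ ha =>
    have := inv_mem ha
    simpa [mul_assoc] using this

lemma conj_x_mem (x y : G) {t : G} (ht : t ∈ sSubgroup x y) : x⁻¹ * t * x ∈ sSubgroup x y := by
  refine conj_mem_sSubgroup (fun n => ?_) ht
  have := mul_mem (sSeq_mem x y (n + 2)) (sSeq_mem x y (n + 3))
  rw [sSeq_succ] at this
  simpa [pcomm, mul_assoc] using this

lemma conj_y_mem {x y : G}
    (hmeta : ∀ i j, 2 ≤ i → 2 ≤ j → pcomm (sSeq x y i) (sSeq x y j) = 1)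
    (hc2 : pcomm (sSeq x y 2) y ∈ sSubgroup x y) {t : G} (ht : t ∈ sSubgroup x y) :
    y⁻¹ * t * y ∈ sSubgroup x y := by
  refine conj_mem_sSubgroup (fun n => ?_) ht
  induction n with
  | zero =>
    have := mul_mem (sSeq_mem x y 2) hc2
    simpa [pcomm, mul_assoc] using this
  | succ n ih =>
    set u := y⁻¹ * sSeq x y (n + 2) * y with hu
    have hux := conj_x_mem x y ih
    have hs2 : pcomm y x = sSeq x y 2 := rfl
    -- conjugation by `x ^ y = x * s₂⁻¹` agrees with conjugation by `x` on `u`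
    have hconj : (y⁻¹ * x * y)⁻¹ * u * (y⁻¹ * x * y) = x⁻¹ * u * x := by
      have hxy : y⁻¹ * x * y = x * (sSeq x y 2)⁻¹ := by
        rw [← hs2]; simp [pcomm, mul_assoc]
      rw [hxy]
      have hcom := sSubgroup_commute hmeta (sSeq_mem x y 2) hux
      calc _ = sSeq x y 2 * (x⁻¹ * u * x) * (sSeq x y 2)⁻¹ := by simp [mul_assoc]
        _ = _ := by rw [hcom, mul_inv_cancel_right]
    have hfin : y⁻¹ * sSeq x y (n + 1 + 2) * y = u⁻¹ * (x⁻¹ * u * x) := by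
      rw [← hconj, show n + 1 + 2 = n + 3 by omega, sSeq_succ, hu]
      simp [pcomm, mul_assoc]
    rw [hfin]
    exact mul_mem (inv_mem ih) hux

lemma sSubgroup_normal [Finite G] {x y : G} (hgen : Subgroup.closure ({x, y} : Set G) = ⊤)
    (hmeta : ∀ i j, 2 ≤ i → 2 ≤ j → pcomm (sSeq x y i) (sSeq x y j) = 1)
    (hc2 : pcomm (sSeq x y 2) y ∈ sSubgroup x y) : (sSubgroup x y).Normal := by
  have key : ∀ g : G, ∀ t ∈ sSubgroup x y, g⁻¹ * t * g ∈ sSubgroup x y := by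
    intro g
    have hg : g ∈ Subgroup.closure ({x, y} : Set G) := hgen ▸ Subgroup.mem_top g
    induction hg using Subgroup.closure_induction with
    | mem g hg =>
      rcases hg with rfl | rfl
      · exact fun t ht => conj_x_mem g y ht
      · exact fun t ht => conj_y_mem hmeta hc2 ht
    | one => simp
    | mul a b _ _ ha hb =>
      intro t ht
      have := hb _ (ha _ ht)
      simpa [mul_assoc] using this
    | inv a _ ha =>
      -- in a finite group, `a⁻¹` is a natural power of `a`
      have hpow : ∀ n : ℕ, ∀ t ∈ sSubgroup x y, (a ^ n)⁻¹ * t * a ^ n ∈ sSubgroup x y := by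
        intro n
        induction n with
        | zero => simp
        | succ n ih =>
          intro t ht
          have := ha _ (ih _ ht)
          rw [pow_succ]
          simpa [mul_assoc] using this
      have hinv : a ^ (orderOf a - 1) = a⁻¹ := by
        rw [eq_inv_iff_mul_eq_one, ← pow_succ, Nat.sub_add_cancel (orderOf_pos a),
          pow_orderOf_eq_one]
      rw [← hinv]
      exact hpow _
  exact ⟨fun t ht g => by simpa using key g⁻¹ t ht⟩

/-- Two elements that commute modulo `S` and generate `G`, with `p`-th powers in `S`: then `S` has
index at most `p ^ 2`, and it contains the commutator subgroup. -/
lemma quotient_facts {x y : G} (hgen : Subgroup.closure ({x, y} : Set G) = ⊤)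
    (S : Subgroup G) [S.Normal] (hxy : pcomm y x ∈ S) {p : ℕ} (hp : 0 < p)
    (hx : x ^ p ∈ S) (hy : y ^ p ∈ S) : commutator G ≤ S ∧ Nat.card (G ⧸ S) ≤ p ^ 2 := by
  have hcl : Subgroup.closure ({(x : G ⧸ S), (y : G ⧸ S)} : Set (G ⧸ S)) = ⊤ := by
    have := congrArg (Subgroup.map (QuotientGroup.mk' S)) hgen
    rw [MonoidHom.map_closure, Set.image_pair,
      Subgroup.map_top_of_surjective _ (QuotientGroup.mk'_surjective S)] at this
    exact this
  have hxyc : (y : G ⧸ S) * x = x * y := by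
    apply commute_of_pcomm_eq_one
    exact (QuotientGroup.eq_one_iff _).2 hxy
  have hcomm : ∀ a b : G ⧸ S, a * b = b * a := by
    intro a b
    have ha : a ∈ Subgroup.closure ({(x : G ⧸ S), (y : G ⧸ S)} : Set (G ⧸ S)) :=
      hcl ▸ Subgroup.mem_top a
    have hb : b ∈ Subgroup.closure ({(x : G ⧸ S), (y : G ⧸ S)} : Set (G ⧸ S)) :=
      hcl ▸ Subgroup.mem_top b
    induction ha, hb using Subgroup.closure_induction₂ with
    | mem a b ha hb =>
      rcases ha with rfl | rfl <;> rcases hb with rfl | rfl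
      · rfl
      · exact hxyc.symm
      · exact hxyc
      · rfl
    | one_left => simp
    | one_right => simp
    | mul_left a b c _ _ _ h1 h2 => exact Commute.mul_left h1 h2
    | mul_right a b c _ _ _ h1 h2 => exact Commute.mul_right h1 h2
    | inv_left a b _ _ h => exact Commute.inv_left h
    | inv_right a b _ _ h => exact Commute.inv_right h
  refine ⟨Subgroup.Normal.quotient_commutative_iff_commutator_le.1 ⟨⟨hcomm⟩⟩, ?_⟩
  -- representatives `x ^ i * y ^ j` with `0 ≤ i, j < p` exhaust the quotient
  let _ : CommGroup (G ⧸ S) := { (inferInstance : Group (G ⧸ S)) with mul_comm := hcomm }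
  have hxp : (x : G ⧸ S) ^ p = 1 := (QuotientGroup.eq_one_iff (x ^ p)).2 hx
  have hyp : (y : G ⧸ S) ^ p = 1 := (QuotientGroup.eq_one_iff (y ^ p)).2 hy
  have hred : ∀ a : G ⧸ S, a ^ p = 1 → ∀ n : ℤ, ∃ i : Fin p, a ^ (i : ℕ) = a ^ n := by
    intro a ha n
    have hpz : (0 : ℤ) < p := by exact_mod_cast hp
    have h0 := Int.emod_nonneg n hpz.ne'
    have h1 := Int.emod_lt_of_pos n hpz
    refine ⟨⟨(n % p).toNat, by omega⟩, ?_⟩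
    rw [← zpow_natCast]
    simp only [Int.toNat_of_nonneg h0]
    conv_rhs => rw [← Int.emod_add_mul_ediv n p, zpow_add, zpow_mul, zpow_natCast, ha]
    simp
  have hsurj : Function.Surjective
      (fun ij : Fin p × Fin p => (x : G ⧸ S) ^ (ij.1 : ℕ) * (y : G ⧸ S) ^ (ij.2 : ℕ)) := by
    intro g
    have hg : g ∈ Subgroup.closure ({(x : G ⧸ S), (y : G ⧸ S)} : Set (G ⧸ S)) :=
      hcl ▸ Subgroup.mem_top g
    obtain ⟨a, b, rfl⟩ := Subgroup.mem_closure_pair.1 hg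
    obtain ⟨i, hi⟩ := hred _ hxp a
    obtain ⟨j, hj⟩ := hred _ hyp b
    exact ⟨(i, j), by simp only [hi, hj]⟩
  refine (Nat.card_le_card_of_surjective _ hsurj).trans ?_
  simp [sq]

lemma wIter_mem {S : Subgroup G} [S.Normal] {x y : G} (h : pcomm y x ∈ S) (i j : ℕ) :
    wIter x y i j ∈ S := by
  have aux : ∀ (g t : G) (n : ℕ), t ∈ S → (fun t => pcomm t g)^[n] t ∈ S := by
    intro g t n ht
    induction n with
    | zero => exact ht
    | succ n ih =>
      rw [Function.iterate_succ_apply']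
      exact pcomm_mem_of_normal ih g
  exact aux x _ i (aux y _ j h)

end Group

/-! ### The isomorphism type -/

theorem commutator_subgroup_maximal_class_pGroup_nearly_homocyclic
    {G : Type*} [Group G] [Finite G]
    (p : ℕ) (hp : p.Prime) (m k : ℕ) (hm : 3 ≤ m) (hk : k ≤ m - 4)
    (x y : G) (w z : ℕ) (a : ℕ → ℕ)
    (hw : w ≤ p - 1) (hz : z ≤ p - 1)
    (ha : ∀ l, 1 ≤ l → l ≤ k → a (m - l) ≤ p - 1)
    (hak : 1 ≤ k → 1 ≤ a (m - k))
    (hcard : Nat.card G = p ^ m)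
    (hgen : Subgroup.closure ({x, y} : Set G) = ⊤)
    (hxp : x ^ p = sSeq x y (m - 1) ^ w)
    (hyp : y ^ p * ((List.range (p - 1)).map fun i => sSeq x y (i + 2) ^ p.choose (i + 2)).prod =
      sSeq x y (m - 1) ^ z)
    (hpow : ∀ j, 1 ≤ j → j ≤ m - 2 →
      sSeq x y (j + 1) ^ p *
        ((List.range (p - 1)).map fun i => sSeq x y (j + i + 2) ^ p.choose (i + 2)).prod = 1)
    (hc2 : pcomm (sSeq x y 2) y =
      ((List.range k).map fun i => sSeq x y (m - (i + 1)) ^ a (m - (i + 1))).prod)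
    (hne : ∀ j, 2 ≤ j → j ≤ m - 1 → sSeq x y j ≠ 1)
    (htriv : ∀ j, m ≤ j → sSeq x y j = 1)
    (hmeta : ∀ i j, 2 ≤ i → 2 ≤ j → pcomm (sSeq x y i) (sSeq x y j) = 1)
    (Ψ : MvPolynomial (Fin 2) ℤ → G)
    (hΨadd : ∀ f g, Ψ (f + g) = Ψ f * Ψ g)
    (hΨmon : ∀ i j : ℕ, Ψ (X 0 ^ i * X 1 ^ j) = wIter x y i j)
    (A : Ideal (MvPolynomial (Fin 2) ℤ))
    (hA : ∀ f, f ∈ A ↔ Ψ f = 1)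
    :
    Nonempty ((MvPolynomial (Fin 2) ℤ ⧸ A) ≃+ NearlyHomocyclic p (m - 2)) ∧
    Nonempty (Additive ↥(commutator G) ≃+ NearlyHomocyclic p (m - 2)) := by
  have h2 := hp.two_le
  have hprod : ∀ (n : ℕ) (f e : ℕ → ℕ),
      ((List.range n).map fun i => sSeq x y (f i) ^ e i).prod ∈ sSubgroup x y := by
    intro n f e
    refine Subgroup.list_prod_mem _ fun t ht => ?_
    obtain ⟨i, -, rfl⟩ := List.mem_map.1 ht
    exact pow_mem (sSeq_mem x y _) _
  have hnormal : (sSubgroup x y).Normal :=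
    sSubgroup_normal hgen hmeta (hc2 ▸ hprod k (fun i => m - (i + 1)) fun i => a (m - (i + 1)))
  have hxS : x ^ p ∈ sSubgroup x y := hxp ▸ pow_mem (sSeq_mem x y _) _
  have hyS : y ^ p ∈ sSubgroup x y := by
    refine (Subgroup.mul_mem_cancel_right _
      (hprod (p - 1) (fun i => i + 2) fun i => p.choose (i + 2))).1 ?_
    rw [hyp]
    exact pow_mem (sSeq_mem x y _) _
  have hs2S : pcomm y x ∈ sSubgroup x y := sSeq_mem x y 2
  obtain ⟨hle, hindex⟩ := quotient_facts hgen (sSubgroup x y) hs2S hp.pos hxS hyS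
  have hderived : commutator G = sSubgroup x y := by
    refine le_antisymm hle ((Subgroup.closure_le _).2 ?_)
    rintro _ ⟨n, rfl⟩
    exact wIter_mem (pcomm_mem_commutator y x) n 0
  rw [hderived]
  have hScard : p ^ (m - 2) ≤ Nat.card (sSubgroup x y) := by
    have h := Subgroup.card_eq_card_quotient_mul_card_subgroup (sSubgroup x y)
    rw [hcard, show m = 2 + (m - 2) by omega, pow_add] at h
    refine Nat.le_of_mul_le_mul_left ?_ (pow_pos hp.pos 2)
    calc p ^ 2 * p ^ (m - 2) = _ := h
      _ ≤ _ := Nat.mul_le_mul_right _ hindex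
  let _ : CommGroup (sSubgroup x y) :=
    { (inferInstance : Group (sSubgroup x y)) with
      mul_comm := fun a b => Subtype.ext (sSubgroup_commute hmeta a.2 b.2) }
  let s : ℕ → Additive (sSubgroup x y) :=
    fun n => Additive.ofMul ⟨sSeq x y (n + 2), sSeq_mem x y _⟩
  have hs0 : ∀ n, m - 2 ≤ n → s n = 0 := by
    intro n hn
    exact congrArg Additive.ofMul (Subtype.ext (htriv (n + 2) (by omega)))
  have hrel : ∀ n, p • s n +
      ∑ i ∈ Finset.range (p - 1), p.choose (i + 2) • s (n + i + 1) = 0 := by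
    intro n
    by_cases hn : m - 2 ≤ n
    · -- outside the range of `hpow` every term vanishes
      rw [hs0 n hn, smul_zero, zero_add]
      refine Finset.sum_eq_zero fun i _ => ?_
      rw [hs0 _ (by omega), smul_zero]
    · have h := hpow (n + 1) (by omega) (by omega)
      rw [Finset.sum_range]
      apply Additive.toMul.injective
      apply Subtype.ext
      rw [← Finset.sum_range (fun i => p.choose (i + 2) • s (n + i + 1)),
        Finset.sum_eq_multiset_sum, Finset.range_val, ← Multiset.coe_range, Multiset.map_coe,
        Multiset.sum_coe]
      rw [toMul_add, toMul_nsmul, toMul_list_sum, Subgroup.coe_mul, Subgroup.val_list_prod,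
        List.map_map, List.map_map]
      simpa [Function.comp_def, s, show ∀ i, n + i + 1 + 2 = n + 1 + i + 2 by intro i; omega]
        using h
  have hsgen : AddSubgroup.closure (Set.range s) = ⊤ := by
    rw [eq_top_iff]
    rintro ⟨t, ht⟩ -
    induction ht using Subgroup.closure_induction with
    | mem t ht =>
      obtain ⟨n, rfl⟩ := ht
      exact AddSubgroup.subset_closure ⟨n, rfl⟩
    | one => exact zero_mem (AddSubgroup.closure (Set.range s))
    | mul a b _ _ ha hb => exact add_mem ha hb
    | inv a _ ha => exact neg_mem ha
  obtain ⟨E⟩ := nonempty_addEquiv_nearlyHomocyclic hp hs0 hrel hsgen hScard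
  refine ⟨?_, ⟨E⟩⟩
  -- `Ψ` takes values in `S`, as every monomial does
  let ΨG : MvPolynomial (Fin 2) ℤ →+ Additive G :=
    AddMonoidHom.mk' (fun f => Additive.ofMul (Ψ f)) hΨadd
  have hΨS : ∀ f, Ψ f ∈ sSubgroup x y := by
    intro f
    have hmon : ∀ (c : ℤ) (d : Fin 2 →₀ ℕ), monomial d c =
        c • (X 0 ^ d 0 * X 1 ^ d 1 : MvPolynomial (Fin 2) ℤ) := by
      intro c d
      rw [monomial_eq, smul_eq_C_mul, Finsupp.prod_fintype _ _ (by simp), Fin.prod_univ_two]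
    induction f using MvPolynomial.induction_on' with
    | monomial d c =>
      have h : Ψ (monomial d c) = wIter x y (d 0) (d 1) ^ c := by
        rw [hmon, ← hΨmon]
        exact congrArg Additive.toMul (map_zsmul ΨG c (X 0 ^ d 0 * X 1 ^ d 1))
      rw [h]
      exact zpow_mem (wIter_mem hs2S _ _) c
    | add f g hf hg =>
      rw [hΨadd]
      exact mul_mem hf hg
  let Ψ' : MvPolynomial (Fin 2) ℤ →+ Additive (sSubgroup x y) :=
    AddMonoidHom.mk' (fun f => Additive.ofMul ⟨Ψ f, hΨS f⟩) fun f g => by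
      exact congrArg Additive.ofMul (Subtype.ext (hΨadd f g))
  -- the powers of the first variable are sent to the generators of `S`
  have hsurj : Function.Surjective Ψ' := by
    rw [← AddMonoidHom.range_eq_top, eq_top_iff, ← hsgen, AddSubgroup.closure_le]
    rintro _ ⟨n, rfl⟩
    exact ⟨X 0 ^ n * X 1 ^ 0, congrArg Additive.ofMul (Subtype.ext (hΨmon n 0))⟩
  have hker : Ψ'.ker = A.toAddSubgroup := by
    ext f
    rw [AddMonoidHom.mem_ker, Submodule.mem_toAddSubgroup, hA]
    exact ⟨fun h => congrArg (fun t => ((Additive.toMul t : sSubgroup x y) : G)) h,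
      fun h => congrArg Additive.ofMul (Subtype.ext h)⟩
  have E' : MvPolynomial (Fin 2) ℤ ⧸ A ≃+ Additive (sSubgroup x y) :=
    (QuotientAddGroup.quotientAddEquivOfEq hker.symm).trans
      (QuotientAddGroup.quotientKerEquivOfSurjective Ψ' hsurj)
  exact ⟨E'.trans E⟩
end

section
/- If μ ≥ 3, then for each integer 0 ≤ j < μ, the additive order of the residue class of X^{μ−j} in the quotient ring ℤ[X,Y]/𝔖_{μ,ν}(β,δ,ρ) is 3^{j/2} if j is even, and 3^{(j+1)/2} if j is odd; in particular this order is independent of the parameters β, δ, ρ. -/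
/-!
Write `x`, `y` for the classes of `X`, `Y` and `m = μ - 1 ≥ 2`. Multiplying the trace relation by
`x` and using `x y = ρ δ x ^ m`, `x ^ (m + 1) = 0` gives `3 x ^ m = 0` and
`x ^ 3 + 3 x ^ 2 + 3 x = 0` (`cubic_relation`). Since `1 + x` is a unit, multiplication by `3`
sends `x ^ a`, `a ≥ 1`, to a unit multiple of `x ^ (a + 2)` (`three_pow_mul_pow`). So the order of
every `x ^ (μ - j)` is known as soon as `x ^ m ≠ 0` (`addOrderOf_pow_sub`).

To see `X ^ m ∉ 𝔖`, one constructs an additive functional `φ : ℤ[X,Y] → ℚ` with `φ 𝔖 ⊆ ℤ` and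
`φ (X ^ m) = 1/3`. Its values on monomials (`weight`) are found by solving the relations backwards
from `X ^ m` and `Y ^ ν`, which is always possible because `ℚ` allows division by `3`.
-/

open MvPolynomial

/-- The general template ideal `𝔖_{μ,ν}(β,δ,ρ)` of `ℤ[X,Y]`, generated by
`X^μ`, `Y^ν - ρX^{μ-1}`, `XY - ρδX^{μ-1}` and `T(X,Y) + ρβX^{μ-1}`, where
`T(X,Y) = X² + 3X + 3 + 3Y + Y²` is the trace polynomial. -/
noncomputable def Sideal (μ ν : ℕ) (β δ ρ : ℤ) : Ideal (MvPolynomial (Fin 2) ℤ) :=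
  Ideal.span {X 0 ^ μ, X 1 ^ ν - C ρ * X 0 ^ (μ - 1),
    X 0 * X 1 - C (ρ * δ) * X 0 ^ (μ - 1),
    X 0 ^ 2 + 3 * X 0 + 3 + 3 * X 1 + X 1 ^ 2 + C (ρ * β) * X 0 ^ (μ - 1)}

/-! ### Powers of `x` in a ring satisfying the template relations -/

section QuotientArithmetic

variable {R : Type*} [CommRing R]

lemma cubic_relation {k : ℕ} {x y d e : R} (h0 : x ^ (k + 3) = 0)
    (hxy : x * y = d * x ^ (k + 2))
    (hT : x ^ 2 + 3 * x + 3 + 3 * y + y ^ 2 + e * x ^ (k + 2) = 0) :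
    x ^ 3 + 3 * x ^ 2 + 3 * x = 0 := by
  have hy : y * x ^ (k + 2) = 0 := by
    linear_combination x ^ (k + 1) * hxy + d * x ^ k * h0
  have h1 : x ^ 3 + 3 * x ^ 2 + 3 * x + 3 * d * x ^ (k + 2) = 0 := by
    linear_combination x * hT - (3 + y) * hxy - d * hy - e * h0
  have h3 : 3 * x ^ (k + 2) = 0 := by
    linear_combination x ^ (k + 1) * h1 - (x + 3 + 3 * d * x ^ k) * h0
  linear_combination h1 - d * h3

lemma three_pow_mul_pow {x u : R} (hu : 3 * x = u * x ^ 3) (a k : ℕ) :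
    3 ^ k * x ^ (a + 1) = u ^ k * x ^ (a + 1 + 2 * k) := by
  induction k with
  | zero => simp
  | succ k ih =>
    rw [pow_succ, mul_right_comm, ih]
    linear_combination u ^ k * x ^ (a + 2 * k) * hu

lemma addOrderOf_pow_sub {μ : ℕ} {x : R} (h0 : x ^ μ = 0) (h1 : x ^ (μ - 1) ≠ 0)
    (hc : x ^ 3 + 3 * x ^ 2 + 3 * x = 0) {j : ℕ} (hj : j < μ) :
    addOrderOf (x ^ (μ - j)) = if Even j then 3 ^ (j / 2) else 3 ^ ((j + 1) / 2) := by
  obtain ⟨v, hv⟩ : IsUnit (1 + x) := (show IsNilpotent x from ⟨μ, h0⟩).isUnit_one_add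
  have hvi : (1 + x) * (↑v⁻¹ : R) = 1 := by rw [← hv, Units.mul_inv]
  -- The cubic relation reads `3 x (1 + x) = -x ^ 3`.
  obtain ⟨u, hu⟩ : ∃ u : Rˣ, 3 * x = (u : R) * x ^ 3 := by
    refine ⟨-v⁻¹, ?_⟩
    push_cast
    linear_combination (↑v⁻¹ : R) * hc - 3 * x * hvi
  have key (a k : ℕ) (ha : 1 ≤ a) : 3 ^ k • x ^ a = (u : R) ^ k * x ^ (a + 2 * k) := by
    obtain ⟨a, rfl⟩ := Nat.exists_eq_add_of_le' ha
    rw [← three_pow_mul_pow hu, nsmul_eq_mul]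
    push_cast
    rfl
  have hz (a k : ℕ) (ha : 1 ≤ a) (h : μ ≤ a + 2 * k) : 3 ^ k • x ^ a = 0 := by
    rw [key a k ha, pow_eq_zero_of_le h h0, mul_zero]
  have hnz (a k : ℕ) (ha : 1 ≤ a) (h : a + 2 * k ≤ μ - 1) : 3 ^ k • x ^ a ≠ 0 := by
    rw [key a k ha, ← Units.val_pow_eq_pow_val, Ne, Units.mul_right_eq_zero]
    exact fun h' => h1 (pow_eq_zero_of_le h h')
  have : Fact (Nat.Prime 3) := ⟨Nat.prime_three⟩
  split_ifs with he
  · obtain ⟨k, rfl⟩ := he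
    obtain rfl | k := k
    · simp [h0]
    · rw [show (k + 1 + (k + 1)) / 2 = k + 1 by omega]
      exact addOrderOf_eq_prime_pow (hnz _ _ (by omega) (by omega))
        (hz _ _ (by omega) (by omega))
  · obtain ⟨k, rfl⟩ := Nat.not_even_iff_odd.mp he
    rw [show (2 * k + 1 + 1) / 2 = k + 1 by omega]
    exact addOrderOf_eq_prime_pow (hnz _ _ (by omega) (by omega))
      (hz _ _ (by omega) (by omega))

end QuotientArithmetic

/-! ### The weights and the functional -/

/-- The solution of `h k + 3 h (k + 1) + 3 h (k + 2) = 0` starting with `1/3, -1/3`: the relation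
`X ^ (a + 2) + 3 X ^ (a + 1) + 3 X ^ a = 0`, read backwards from the top power `X ^ m`, with
`h k` in the place of `X ^ (m - k)`. -/
def backSeq : ℕ → ℚ
  | 0 => 1 / 3
  | 1 => -1 / 3
  | k + 2 => -(backSeq k + 3 * backSeq (k + 1)) / 3

/-- `backSeq` reindexed to end at the exponent `m`, and zero beyond `m`. -/
def topSeq (m a : ℕ) : ℚ := if a ≤ m then backSeq (m - a) else 0

lemma topSeq_self (m : ℕ) : topSeq m m = 1 / 3 := by simp [topSeq, backSeq]

lemma topSeq_of_lt {m a : ℕ} (h : m < a) : topSeq m a = 0 := by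
  simp [topSeq, Nat.not_le.mpr h]

/-- The backward recurrence holds exactly below the top exponent `m`; at `a = m` the left side is
`3 * (1/3) = 1`, so it only holds modulo `ℤ`. -/
lemma topSeq_rec (m a : ℕ) :
    ∃ n : ℤ, topSeq m (a + 2) + 3 * topSeq m (a + 1) + 3 * topSeq m a = n := by
  rcases lt_trichotomy a m with h | rfl | h
  · obtain ⟨c, rfl⟩ := Nat.exists_eq_add_of_lt h
    refine ⟨0, ?_⟩
    obtain rfl | c := c
    · norm_num [topSeq, backSeq]
    · simp only [topSeq, show a + 2 ≤ a + (c + 1) + 1 by omega,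
        show a + 1 ≤ a + (c + 1) + 1 by omega, show a ≤ a + (c + 1) + 1 by omega, if_true,
        show a + (c + 1) + 1 - (a + 2) = c by omega,
        show a + (c + 1) + 1 - (a + 1) = c + 1 by omega,
        show a + (c + 1) + 1 - a = c + 2 by omega, backSeq]
      push_cast
      ring
  · exact ⟨1, by norm_num [topSeq_self, topSeq_of_lt]⟩
  · refine ⟨0, ?_⟩
    rw [topSeq_of_lt h, topSeq_of_lt (by omega), topSeq_of_lt (by omega)]
    norm_num

/-- The value of the functional `φ` at `X ^ a * Y ^ b`, with `m = μ - 1`. The value at `1` is the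
one making `φ` vanish on the generator `T + ρ β X ^ m`. -/
def weight (m ν : ℕ) (β δ ρ : ℤ) : ℕ → ℕ → ℚ
  | 0, 0 => -(topSeq m 2 + 3 * topSeq m 1 + 3 * (ρ * topSeq ν 1) + ρ * topSeq ν 2
      + ρ * β / 3) / 3
  | a + 1, 0 => topSeq m (a + 1)
  | 0, b + 1 => ρ * topSeq ν (b + 1)
  | 1, 1 => ρ * δ / 3
  | _ + 1, _ + 1 => 0

/-- The additive functional `φ : ℤ[X,Y] → ℚ` with values `weight` on monomials. -/
noncomputable def functional (m ν : ℕ) (β δ ρ : ℤ) : MvPolynomial (Fin 2) ℤ →ₗ[ℤ] ℚ :=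
  (MvPolynomial.basisMonomials (Fin 2) ℤ).constr ℤ fun s => weight m ν β δ ρ (s 0) (s 1)

lemma functional_apply (m ν : ℕ) (β δ ρ n : ℤ) (a b : ℕ) :
    functional m ν β δ ρ (C n * (X 0 ^ a * X 1 ^ b)) = n * weight m ν β δ ρ a b := by
  have h : (X 0 ^ a * X 1 ^ b : MvPolynomial (Fin 2) ℤ) =
      MvPolynomial.basisMonomials (Fin 2) ℤ (Finsupp.single 0 a + Finsupp.single 1 b) := by
    simp [X_pow_eq_monomial, monomial_mul]
  rw [← smul_eq_C_mul, map_smul, h, functional, Module.Basis.constr_basis]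
  simp

/-- Polynomials all of whose multiples take integral values under `φ`. -/
noncomputable def integralIdeal (φ : MvPolynomial (Fin 2) ℤ →ₗ[ℤ] ℚ) :
    Ideal (MvPolynomial (Fin 2) ℤ) where
  carrier := {p | ∀ q, ∃ n : ℤ, φ (q * p) = n}
  zero_mem' q := ⟨0, by simp⟩
  add_mem' {p p'} hp hp' q := by
    obtain ⟨n, hn⟩ := hp q
    obtain ⟨n', hn'⟩ := hp' q
    exact ⟨n + n', by rw [mul_add, map_add, hn, hn']; push_cast; rfl⟩
  smul_mem' c p hp q := by
    obtain ⟨n, hn⟩ := hp (q * c)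
    exact ⟨n, by rw [smul_eq_mul, ← mul_assoc, hn]⟩

lemma mem_integralIdeal {φ : MvPolynomial (Fin 2) ℤ →ₗ[ℤ] ℚ} {p : MvPolynomial (Fin 2) ℤ}
    (h : ∀ a b : ℕ, ∃ n : ℤ, φ (X 0 ^ a * X 1 ^ b * p) = n) : p ∈ integralIdeal φ := by
  intro q
  induction q using MvPolynomial.induction_on' with
  | monomial s c =>
    obtain ⟨n, hn⟩ := h (s 0) (s 1)
    refine ⟨c * n, ?_⟩
    have hs : (monomial s c : MvPolynomial (Fin 2) ℤ) = C c * (X 0 ^ s 0 * X 1 ^ s 1) := by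
      rw [monomial_eq, Finsupp.prod_fintype _ _ (by simp), Fin.prod_univ_two]
    rw [hs, mul_assoc, ← smul_eq_C_mul, map_smul, hn]
    simp
  | add p q hp hq =>
    obtain ⟨n, hn⟩ := hp
    obtain ⟨n', hn'⟩ := hq
    exact ⟨n + n', by rw [add_mul, map_add, hn, hn']; push_cast; rfl⟩

/-! ### The template relations for the weights -/

section Weight

variable (m ν : ℕ) (β δ ρ : ℤ)

lemma weight_succ_zero (a : ℕ) : weight m ν β δ ρ (a + 1) 0 = topSeq m (a + 1) := by
  simp [weight]

lemma weight_zero_succ (b : ℕ) : weight m ν β δ ρ 0 (b + 1) = ρ * topSeq ν (b + 1) := by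
  simp [weight]

lemma weight_one_one : weight m ν β δ ρ 1 1 = ρ * δ / 3 := by
  simp [weight]

lemma weight_add_two_succ (a b : ℕ) : weight m ν β δ ρ (a + 2) (b + 1) = 0 := by
  simp [weight]

lemma weight_succ_add_two (a b : ℕ) : weight m ν β δ ρ (a + 1) (b + 2) = 0 := by
  simp [weight]

lemma weight_mixed (a b : ℕ) : ∃ n : ℤ, 3 * weight m ν β δ ρ (a + 1) (b + 1) = n := by
  obtain rfl | a := a
  · obtain rfl | b := b
    · exact ⟨ρ * δ, by rw [weight_one_one]; push_cast; ring⟩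
    · exact ⟨0, by rw [weight_succ_add_two]; simp⟩
  · exact ⟨0, by rw [weight_add_two_succ]; simp⟩

/-- Beyond the socle `X ^ m` of the `X`-axis, all weights vanish. -/
lemma weight_large {a b : ℕ} (hm : 2 ≤ m) (ha : m ≤ a) (h : m < a ∨ 0 < b) :
    weight m ν β δ ρ a b = 0 := by
  obtain ⟨a, rfl⟩ := Nat.exists_eq_add_of_le' (hm.trans ha)
  obtain rfl | b := b
  · rw [weight_succ_zero, topSeq_of_lt (by omega)]
  · rw [weight_add_two_succ]

lemma weight_top (hm : 2 ≤ m) : weight m ν β δ ρ m 0 = 1 / 3 := by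
  obtain ⟨k, rfl⟩ := Nat.exists_eq_add_of_le' hm
  rw [weight_succ_zero, topSeq_self]

/-- On multiples of `Y ^ ν - ρ X ^ m`, the functional vanishes. -/
lemma weight_binomial (hm : 2 ≤ m) (hν : 2 ≤ ν) (a b : ℕ) :
    weight m ν β δ ρ a (b + ν) = ρ * weight m ν β δ ρ (a + m) b := by
  obtain ⟨c, rfl⟩ := Nat.exists_eq_add_of_le' hν
  obtain rfl | a := a
  · rw [show b + (c + 2) = b + c + 1 + 1 by ring, weight_zero_succ, zero_add]
    obtain rfl | b := b
    · rw [weight_top _ _ _ _ _ hm, show 0 + c + 1 + 1 = c + 2 by ring, topSeq_self]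
    · rw [weight_large _ _ _ _ _ hm le_rfl (by omega), topSeq_of_lt (by omega)]
  · rw [weight_large (a := a + 1 + m) _ _ _ _ _ hm (by omega) (by omega),
      show b + (c + 2) = b + c + 2 by ring, weight_succ_add_two, mul_zero]

/-- On multiples of `X Y - ρ δ X ^ m`, the functional vanishes. -/
lemma weight_mul (hm : 2 ≤ m) (a b : ℕ) :
    weight m ν β δ ρ (a + 1) (b + 1) = ρ * δ * weight m ν β δ ρ (a + m) b := by
  obtain rfl | a := a
  · obtain rfl | b := b
    · rw [zero_add, zero_add, weight_one_one, weight_top _ _ _ _ _ hm]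
      ring
    · rw [weight_succ_add_two, weight_large _ _ _ _ _ hm (by omega) (by omega), mul_zero]
  · rw [weight_add_two_succ, weight_large _ _ _ _ _ hm (by omega) (by omega), mul_zero]

/-- On multiples of `T + ρ β X ^ m`, the functional is integral. -/
lemma weight_trace (hm : 2 ≤ m) (a b : ℕ) :
    ∃ n : ℤ, weight m ν β δ ρ (a + 2) b + 3 * weight m ν β δ ρ (a + 1) b
      + 3 * weight m ν β δ ρ a b + 3 * weight m ν β δ ρ a (b + 1) + weight m ν β δ ρ a (b + 2)
      + ρ * β * weight m ν β δ ρ (a + m) b = n := by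
  obtain rfl | a := a
  · obtain rfl | b := b
    · refine ⟨0, ?_⟩
      rw [zero_add, zero_add, zero_add, weight_top _ _ _ _ _ hm]
      simp only [weight]
      push_cast
      ring
    · obtain ⟨n, hn⟩ := topSeq_rec ν (b + 1)
      obtain ⟨k, hk⟩ := weight_mixed m ν β δ ρ 0 b
      refine ⟨k + ρ * n, ?_⟩
      rw [weight_add_two_succ, weight_large (a := 0 + m) _ _ _ _ _ hm (by omega) (by omega), hk,
        weight_zero_succ, weight_zero_succ, weight_zero_succ (b := b + 1 + 1)]
      push_cast
      rw [← hn]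
      ring
  · rw [weight_large (a := a + 1 + m) _ _ _ _ _ hm (by omega) (by omega)]
    obtain ⟨k, hk⟩ := weight_mixed m ν β δ ρ a b
    rw [hk, weight_succ_add_two]
    obtain rfl | b := b
    · obtain ⟨n, hn⟩ := topSeq_rec m (a + 1)
      refine ⟨n + k, ?_⟩
      rw [weight_succ_zero (a := a + 2), weight_succ_zero, weight_succ_zero]
      push_cast
      rw [← hn]
      ring
    · obtain ⟨n, hn⟩ := weight_mixed m ν β δ ρ a b
      refine ⟨n + k, ?_⟩
      rw [weight_add_two_succ, weight_add_two_succ, hn]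
      push_cast
      ring

end Weight

/-! ### Non-vanishing of `X ^ (μ - 1)` and conclusion -/

lemma Sideal_le_integralIdeal {μ ν : ℕ} (β δ ρ : ℤ) (hμ : 3 ≤ μ) (hν : 2 ≤ ν) :
    Sideal μ ν β δ ρ ≤ integralIdeal (functional (μ - 1) ν β δ ρ) := by
  have hm : 2 ≤ μ - 1 := by omega
  rw [Sideal, Ideal.span_le]
  rintro p (rfl | rfl | rfl | rfl) <;> refine mem_integralIdeal fun a b => ?_
  · refine ⟨0, ?_⟩
    rw [show (X 0 ^ a * X 1 ^ b * X 0 ^ μ : MvPolynomial (Fin 2) ℤ) =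
        C 1 * (X 0 ^ (a + μ) * X 1 ^ b) by rw [C_1]; ring, functional_apply,
      weight_large _ _ _ _ _ hm (by omega) (by omega)]
    simp
  · refine ⟨0, ?_⟩
    rw [show (X 0 ^ a * X 1 ^ b * (X 1 ^ ν - C ρ * X 0 ^ (μ - 1)) : MvPolynomial (Fin 2) ℤ) =
        C 1 * (X 0 ^ a * X 1 ^ (b + ν)) - C ρ * (X 0 ^ (a + (μ - 1)) * X 1 ^ b) by
          rw [C_1]; ring, map_sub, functional_apply, functional_apply,
      weight_binomial _ _ _ _ _ hm hν]
    simp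
  · refine ⟨0, ?_⟩
    rw [show (X 0 ^ a * X 1 ^ b * (X 0 * X 1 - C (ρ * δ) * X 0 ^ (μ - 1)) :
          MvPolynomial (Fin 2) ℤ) =
        C 1 * (X 0 ^ (a + 1) * X 1 ^ (b + 1)) - C (ρ * δ) * (X 0 ^ (a + (μ - 1)) * X 1 ^ b) by
          rw [C_1]; ring, map_sub, functional_apply, functional_apply,
      weight_mul _ _ _ _ _ hm]
    simp
  · obtain ⟨n, hn⟩ := weight_trace (μ - 1) ν β δ ρ hm a b
    refine ⟨n, ?_⟩
    have h3 : (C 3 : MvPolynomial (Fin 2) ℤ) = 3 := map_ofNat C 3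
    rw [show (X 0 ^ a * X 1 ^ b * (X 0 ^ 2 + 3 * X 0 + 3 + 3 * X 1 + X 1 ^ 2
          + C (ρ * β) * X 0 ^ (μ - 1)) : MvPolynomial (Fin 2) ℤ) =
        C 1 * (X 0 ^ (a + 2) * X 1 ^ b) + C 3 * (X 0 ^ (a + 1) * X 1 ^ b)
          + C 3 * (X 0 ^ a * X 1 ^ b) + C 3 * (X 0 ^ a * X 1 ^ (b + 1))
          + C 1 * (X 0 ^ a * X 1 ^ (b + 2)) + C (ρ * β) * (X 0 ^ (a + (μ - 1)) * X 1 ^ b) by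
          rw [C_1, h3]; ring]
    simp only [map_add, functional_apply]
    rw [← hn]
    push_cast
    ring

lemma X_pow_notMem_Sideal {μ ν : ℕ} (β δ ρ : ℤ) (hμ : 3 ≤ μ) (hν : 2 ≤ ν) :
    (X 0 ^ (μ - 1) : MvPolynomial (Fin 2) ℤ) ∉ Sideal μ ν β δ ρ := by
  intro h
  obtain ⟨n, hn⟩ := Sideal_le_integralIdeal β δ ρ hμ hν h 1
  rw [show (1 * X 0 ^ (μ - 1) : MvPolynomial (Fin 2) ℤ) = C 1 * (X 0 ^ (μ - 1) * X 1 ^ 0) by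
      simp, functional_apply, weight_top _ _ _ _ _ (by omega)] at hn
  have h3 : (1 : ℚ) = ((3 * n : ℤ) : ℚ) := by
    push_cast at hn ⊢
    linarith
  have h3' : 1 = 3 * n := by exact_mod_cast h3
  omega

theorem order_of_powers_of_X_in_template_quotient
    (μ ν : ℕ) (β δ ρ : ℤ) (hμ : 3 ≤ μ) (hνμ : ν ≤ μ) (hν : 2 ≤ ν)
    (hβ : β = -1 ∨ β = 0 ∨ β = 1) (hδ : δ = -1 ∨ δ = 0 ∨ δ = 1)
    (hρ : ρ = -1 ∨ ρ = 0 ∨ ρ = 1) :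
    ∀ j, j < μ →
      addOrderOf (Ideal.Quotient.mk (Sideal μ ν β δ ρ) (X 0 ^ (μ - j))) =
        if Even j then 3 ^ (j / 2) else 3 ^ ((j + 1) / 2) := by
  intro j hj
  have hmem : ∀ p ∈ ({X 0 ^ μ, X 1 ^ ν - C ρ * X 0 ^ (μ - 1),
      X 0 * X 1 - C (ρ * δ) * X 0 ^ (μ - 1),
      X 0 ^ 2 + 3 * X 0 + 3 + 3 * X 1 + X 1 ^ 2 + C (ρ * β) * X 0 ^ (μ - 1)} :
        Set (MvPolynomial (Fin 2) ℤ)), Ideal.Quotient.mk (Sideal μ ν β δ ρ) p = 0 :=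
    fun p hp => Ideal.Quotient.eq_zero_iff_mem.mpr (Ideal.subset_span hp)
  have h0 := hmem (X 0 ^ μ) (by simp)
  have hxy := hmem (X 0 * X 1 - C (ρ * δ) * X 0 ^ (μ - 1)) (by simp)
  have hT := hmem (X 0 ^ 2 + 3 * X 0 + 3 + 3 * X 1 + X 1 ^ 2 + C (ρ * β) * X 0 ^ (μ - 1))
    (by simp)
  have h1 : Ideal.Quotient.mk (Sideal μ ν β δ ρ) (X 0 ^ (μ - 1)) ≠ 0 := fun h =>
    X_pow_notMem_Sideal β δ ρ hμ hν (Ideal.Quotient.eq_zero_iff_mem.mp h)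
  simp only [map_sub, map_add, map_mul (Ideal.Quotient.mk _), map_pow, map_ofNat, sub_eq_zero]
    at h0 hxy hT h1
  rw [map_pow]
  refine addOrderOf_pow_sub h0 h1 ?_ hj
  obtain ⟨k, rfl⟩ := Nat.exists_eq_add_of_le' hμ
  exact cubic_relation h0 hxy hT
end

section
/- If μ ≥ ν ≥ 3, then for each integer 0 ≤ ℓ < ν, the additive order of the residue class of Y^{ν−ℓ} in the quotient ring ℤ[X,Y]/𝔖_{μ,ν}(β,δ,ρ) is: 3^{ℓ/2} if ℓ is even and ρ = 0; 3^{(ℓ+2)/2} if ℓ is even and ρ = ±1; and 3^{(ℓ+1)/2} if ℓ is odd. -/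
/-!
Write `x`, `y` for the classes of `X`, `Y` and `w = x ^ (μ - 1)`. Multiplying the relations by `w`
and by `y` gives `x w = y w = 3 w = 0`, hence `y ^ (ν + 1) = 0` and `y (y² + 3 y + 3) = 0`.
As `y` is nilpotent, `1 + y` is a unit, so `3 y ^ k` is a unit multiple of `y ^ (k + 2)` for `k ≥ 1`;
consequently `3 ^ j y ^ k = 0` exactly when `y ^ (k + 2 j) = 0` (`three_pow_mul_pow_eq_zero_iff`).
The orders are therefore determined by the largest `N` with `y ^ N ≠ 0`, and the claim amounts to
`N = ν - 1` for `ρ = 0` and `N = ν` for `ρ = ±1`.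

The remaining point is that these powers of `y` do not vanish. For this, `exists_functional`
builds an additive map on `ℤ[X,Y]`, with values in a 3-divisible group such as `ℚ/ℤ`, which kills
the ideal: it is prescribed on monomials, with
`XⁱYʲ ↦ 0` for `i, j ≥ 1` apart from `XY`, and on the powers of `X` and of `Y` it follows the
recurrence `s (i + 2) + 3 s (i + 1) + 3 s i = 0` downwards from the top exponent, which is
possible by divisibility.
-/

open MvPolynomial

/-- If `y` is nilpotent and `y (y² + 3 y + 3) = 0`, then multiplication by `3` acts on the positive
powers of `y` like multiplication by `y²`, up to a unit. -/
lemma three_pow_mul_pow_eq_zero_iff {R : Type*} [CommRing R] {y : R} (hn : IsNilpotent y)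
    (hy : y * (y ^ 2 + 3 * y + 3) = 0) {k : ℕ} (hk : 1 ≤ k) (j : ℕ) :
    3 ^ j * y ^ k = 0 ↔ y ^ (k + 2 * j) = 0 := by
  have hu : IsUnit (1 + y) := hn.isUnit_one_add
  have key : (1 + y) ^ j * (3 ^ j * y ^ k) = (-1) ^ j * y ^ (k + 2 * j) := by
    obtain ⟨k, rfl⟩ := Nat.exists_eq_add_of_le' hk
    induction j with
    | zero => simp
    | succ j ih =>
      have e : y ^ (k + 1 + 2 * (j + 1)) = y ^ (k + 1 + 2 * j) * y ^ 2 := by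
        rw [← pow_add]; ring_nf
      have h0 : y ^ (k + 1 + 2 * j) * (y ^ 2 + 3 * y + 3) = 0 := by
        have : y ^ (k + 1 + 2 * j) = y ^ (k + 2 * j) * y := by rw [← pow_succ]; ring_nf
        rw [this, mul_assoc, hy, mul_zero]
      rw [e]
      linear_combination (3 * (1 + y)) * ih + (-1) ^ j * h0
  have h1 : 3 ^ j * y ^ k = 0 ↔ (1 + y) ^ j * (3 ^ j * y ^ k) = 0 :=
    ((hu.pow j).mul_right_eq_zero).symm
  have h2 : y ^ (k + 2 * j) = 0 ↔ (-1) ^ j * y ^ (k + 2 * j) = 0 :=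
    ((isUnit_one.neg.pow j).mul_right_eq_zero).symm
  rw [h1, h2, key]

/-- `N` is the largest exponent with `y ^ N ≠ 0`; the order of `y ^ k` is `3 ^ j` for the least
`j` with `k + 2 j > N`. -/
lemma addOrderOf_pow_eq {R : Type*} [CommRing R] {y : R} {N : ℕ}
    (h0 : y ^ (N + 1) = 0) (h1 : y ^ N ≠ 0)
    (hy : y * (y ^ 2 + 3 * y + 3) = 0) {k : ℕ} (hk : 1 ≤ k) (j : ℕ)
    (hj : N < k + 2 * j) (hj' : j = 0 ∨ k + 2 * j ≤ N + 2) :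
    addOrderOf (y ^ k) = 3 ^ j := by
  have hn : IsNilpotent y := ⟨_, h0⟩
  have hz : y ^ (k + 2 * j) = 0 := pow_eq_zero_of_le hj h0
  have hsm : ∀ i : ℕ, (3 ^ i) • y ^ k = 3 ^ i * y ^ k := fun i => by simp [nsmul_eq_mul]
  rcases j with _ | j
  · simpa using hz
  · have : Fact (Nat.Prime 3) := ⟨Nat.prime_three⟩
    apply addOrderOf_eq_prime_pow
    · rw [hsm, three_pow_mul_pow_eq_zero_iff hn hy hk]
      intro h
      exact h1 (pow_eq_zero_of_le (by omega) h)
    · rw [hsm, three_pow_mul_pow_eq_zero_iff hn hy hk]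
      exact hz

/-- Downward solution of the recurrence attached to `t² + 3 t + 3`, with prescribed top value. -/
lemma exists_seq {A : Type*} [AddCommGroup A] (hdiv : ∀ a : A, ∃ b : A, (3 : ℤ) • b = a)
    (c : A) (hc : (3 : ℤ) • c = 0) (N : ℕ) :
    ∃ s : ℕ → A, s N = c ∧ (∀ i, N < i → s i = 0) ∧
      ∀ i, s (i + 2) + (3 : ℤ) • s (i + 1) + (3 : ℤ) • s i = 0 := by
  induction N with
  | zero =>
    refine ⟨fun i => if i = 0 then c else 0, by simp, fun i hi => by simp; omega, fun i => ?_⟩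
    rcases i with _ | i <;> simp [hc]
  | succ N ih =>
    obtain ⟨s, h1, h2, h3⟩ := ih
    obtain ⟨b, hb⟩ := hdiv (-(s 1 + (3 : ℤ) • s 0))
    refine ⟨fun i => Nat.casesOn i b s, h1, fun i hi => ?_, fun i => ?_⟩
    · rcases i with _ | i
      · omega
      · exact h2 i (by omega)
    · rcases i with _ | i
      · change s 1 + (3 : ℤ) • s 0 + (3 : ℤ) • b = 0
        rw [hb]; abel
      · exact h3 i

/-- The value on `X ^ i * Y ^ j` of the additive functional with values `z` at `1`, `u i` at
`X ^ i`, `v j` at `Y ^ j`, `r` at `X * Y` and `0` at every other monomial. -/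
def monVal {A : Type*} [Zero A] (z r : A) (u v : ℕ → A) : ℕ → ℕ → A
  | 0, 0 => z
  | 0, j + 1 => v (j + 1)
  | i + 1, 0 => u (i + 1)
  | 1, 1 => r
  | _ + 1, _ + 1 => 0

lemma exists_linearMap {A : Type*} [AddCommGroup A] (g : ℕ → ℕ → A) :
    ∃ φ : MvPolynomial (Fin 2) ℤ →ₗ[ℤ] A, ∀ i j, φ (X 0 ^ i * X 1 ^ j) = g i j := by
  refine ⟨(basisMonomials (Fin 2) ℤ).constr ℤ fun d => g (d 0) (d 1), fun i j => ?_⟩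
  have : (X 0 ^ i * X 1 ^ j : MvPolynomial (Fin 2) ℤ) =
      basisMonomials (Fin 2) ℤ (Finsupp.single 0 i + Finsupp.single 1 j) := by
    rw [coe_basisMonomials, X_pow_eq_monomial, X_pow_eq_monomial, monomial_mul, one_mul]
  rw [this, Module.Basis.constr_basis]
  simp

/-- A linear map kills the multiples of `p` as soon as it kills its monomial multiples. -/
lemma linearMap_mul_eq_zero {A : Type*} [AddCommGroup A] (φ : MvPolynomial (Fin 2) ℤ →ₗ[ℤ] A)
    (p : MvPolynomial (Fin 2) ℤ) (h : ∀ i j, φ (X 0 ^ i * X 1 ^ j * p) = 0)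
    (q : MvPolynomial (Fin 2) ℤ) : φ (q * p) = 0 := by
  have : φ ∘ₗ LinearMap.mulRight ℤ p = 0 := by
    apply (basisMonomials (Fin 2) ℤ).ext
    intro d
    have e : basisMonomials (Fin 2) ℤ d = X 0 ^ d 0 * X 1 ^ d 1 := by
      rw [coe_basisMonomials]
      beta_reduce
      rw [monomial_eq, Finsupp.prod_fintype _ _ (by simp)]
      simp
    rw [e]
    simpa using h (d 0) (d 1)
  simpa using LinearMap.congr_fun this q

/-- Compatible values on the monomials define a functional that annihilates the template ideal. -/
lemma exists_functional {A : Type*} [AddCommGroup A] (hdiv : ∀ a : A, ∃ b : A, (3 : ℤ) • b = a)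
    (m n : ℕ) (β δ ρ : ℤ) (u v : ℕ → A) (c : A) (hc : (3 : ℤ) • c = 0)
    (hu1 : u (m + 2) = c) (hu2 : ∀ i, m + 2 < i → u i = 0)
    (hu3 : ∀ i, u (i + 2) + (3 : ℤ) • u (i + 1) + (3 : ℤ) • u i = 0)
    (hv1 : v (n + 3) = ρ • c) (hv2 : ∀ i, n + 3 < i → v i = 0)
    (hv3 : ∀ i, v (i + 2) + (3 : ℤ) • v (i + 1) + (3 : ℤ) • v i = 0) :
    ∃ φ : MvPolynomial (Fin 2) ℤ →ₗ[ℤ] A,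
      (∀ p ∈ Sideal (m + 3) (n + 3) β δ ρ, φ p = 0) ∧ ∀ j, φ (X 1 ^ (j + 1)) = v (j + 1) := by
  -- `z` is chosen so that the trace relation itself is killed.
  obtain ⟨z, hz⟩ := hdiv (-(u 2 + (3 : ℤ) • u 1 + (3 : ℤ) • v 1 + v 2 + (ρ * β) • c))
  set g := monVal z ((ρ * δ) • c) u v with hg
  obtain ⟨φ, hφ⟩ := exists_linearMap g
  have g1 : ∀ j, g 0 (j + 1) = v (j + 1) := fun j => rfl
  have g2 : ∀ i, g (i + 1) 0 = u (i + 1) := fun j => rfl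
  have g3 : g 1 1 = (ρ * δ) • c := rfl
  have g4 : ∀ i j, g (i + 2) (j + 1) = 0 := fun i j => by cases j <;> rfl
  have g5 : ∀ i j, g (i + 1) (j + 2) = 0 := fun i j => by cases i <;> rfl
  have g0 : g 0 0 = z := rfl
  have hc3 : (3 : ℤ) • (ρ * δ) • c = 0 := by rw [smul_comm, hc, smul_zero]
  have hs : ∀ (a : ℤ) p, φ (C a * p) = a • φ p := fun a p => by
    rw [← smul_eq_C_mul, map_zsmul]
  refine ⟨φ, ?_, fun j => by have := hφ 0 (j + 1); rw [pow_zero, one_mul] at this; rw [this, g1]⟩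
  have E1 : ∀ i j, g (i + (m + 3)) j = 0 := by
    intro i j
    rcases j with _ | j
    · exact (g2 (i + m + 2)).trans (hu2 _ (by omega))
    · exact g4 (i + m + 1) j
  have gw : ∀ j, g (m + 2) (j + 1) = 0 := fun j => g4 m j
  have gw' : ∀ i j, g (i + 1 + (m + 2)) j = 0 := fun i j => by
    rw [show i + 1 + (m + 2) = i + (m + 3) by ring]; exact E1 i j
  have gw0 : g (m + 2) 0 = c := hu1
  have E2 : ∀ i j, g i (j + (n + 3)) = ρ • g (i + (m + 2)) j := by
    intro i j
    rcases i with _ | i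
    · rw [zero_add]
      rcases j with _ | j
      · rw [gw0, ← hv1, zero_add]; rfl
      · rw [gw, smul_zero]
        exact (g1 (j + 1 + n + 2)).trans (hv2 _ (by omega))
    · rw [gw', smul_zero]; exact g5 i (j + n + 1)
  have E3 : ∀ i j, g (i + 1) (j + 1) = (ρ * δ) • g (i + (m + 2)) j := by
    intro i j
    rcases i with _ | i
    · rw [zero_add, zero_add]
      rcases j with _ | j
      · rw [gw0]; exact g3
      · rw [gw, smul_zero]; exact g5 0 j
    · rw [gw', smul_zero]; exact g4 i j
  have E4 : ∀ i j, g (i + 2) j + (3 : ℤ) • g (i + 1) j + (3 : ℤ) • g i j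
      + (3 : ℤ) • g i (j + 1) + g i (j + 2) + (ρ * β) • g (i + (m + 2)) j = 0 := by
    intro i j
    rcases i with _ | i <;> rcases j with _ | j
    · simp only [zero_add]
      rw [gw0, g0, hz, show g 2 0 = u 2 from rfl, show g 1 0 = u 1 from rfl,
        show g 0 1 = v 1 from rfl, show g 0 2 = v 2 from rfl]
      abel
    · have h := hv3 (j + 1)
      have h' : (3 : ℤ) • g 1 (j + 1) = 0 := by
        rcases j with _ | j
        · rw [zero_add, g3, hc3]
        · rw [g5 0 j, smul_zero]
      simp only [zero_add]
      rw [gw, h', g4 0 j, g1, g1 (j + 1), g1 (j + 2), smul_zero]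
      refine Eq.trans ?_ h
      abel
    · have h := hu3 (i + 1)
      have h' : (3 : ℤ) • g (i + 1) 1 = 0 := by
        rcases i with _ | i
        · rw [zero_add, g3, hc3]
        · rw [g4 i 0, smul_zero]
      simp only [zero_add]
      rw [gw', h', g5 i 0, g2 i, g2 (i + 1), g2 (i + 2), smul_zero]
      refine Eq.trans ?_ h
      abel
    · have h' : (3 : ℤ) • g (i + 1) (j + 1) = 0 := by
        rcases i with _ | i
        · rcases j with _ | j
          · simp only [zero_add, g3, hc3]
          · rw [g5, smul_zero]
        · rw [g4, smul_zero]
      rw [gw', h', g4 (i + 1) j, g4 i j, g5 i j, g5 i (j + 1)]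
      simp
  intro p hp
  have main : ∀ q, φ (q * p) = 0 := by
    unfold Sideal at hp
    induction hp using Submodule.span_induction with
    | mem x hx =>
      apply linearMap_mul_eq_zero
      intro i j
      rcases hx with rfl | rfl | rfl | rfl
      · rw [show (X 0 ^ i * X 1 ^ j * X 0 ^ (m + 3) : MvPolynomial (Fin 2) ℤ)
          = X 0 ^ (i + (m + 3)) * X 1 ^ j by ring, hφ, E1]
      · rw [show (X 0 ^ i * X 1 ^ j * (X 1 ^ (n + 3) - C ρ * X 0 ^ (m + 3 - 1)) :
          MvPolynomial (Fin 2) ℤ) = X 0 ^ i * X 1 ^ (j + (n + 3))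
            - C ρ * (X 0 ^ (i + (m + 2)) * X 1 ^ j) by
            rw [show m + 3 - 1 = m + 2 from rfl]; ring, map_sub, hs, hφ, hφ, E2, sub_self]
      · rw [show (X 0 ^ i * X 1 ^ j * (X 0 * X 1 - C (ρ * δ) * X 0 ^ (m + 3 - 1)) :
          MvPolynomial (Fin 2) ℤ) = X 0 ^ (i + 1) * X 1 ^ (j + 1)
            - C (ρ * δ) * (X 0 ^ (i + (m + 2)) * X 1 ^ j) by
            rw [show m + 3 - 1 = m + 2 from rfl]; ring, map_sub, hs, hφ, hφ, E3, sub_self]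
      · have h3 : (C 3 : MvPolynomial (Fin 2) ℤ) = 3 := map_ofNat C 3
        rw [show (X 0 ^ i * X 1 ^ j * (X 0 ^ 2 + 3 * X 0 + 3 + 3 * X 1 + X 1 ^ 2
          + C (ρ * β) * X 0 ^ (m + 3 - 1)) : MvPolynomial (Fin 2) ℤ) =
          X 0 ^ (i + 2) * X 1 ^ j + C 3 * (X 0 ^ (i + 1) * X 1 ^ j) + C 3 * (X 0 ^ i * X 1 ^ j)
            + C 3 * (X 0 ^ i * X 1 ^ (j + 1)) + X 0 ^ i * X 1 ^ (j + 2)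
            + C (ρ * β) * (X 0 ^ (i + (m + 2)) * X 1 ^ j) by
            rw [show m + 3 - 1 = m + 2 from rfl, h3]; ring]
        simp only [map_add, hs, hφ]
        exact E4 i j
    | zero => simp
    | add x y _ _ hx hy => intro q; rw [mul_add, map_add, hx, hy, add_zero]
    | smul a x _ hx => intro q; rw [smul_eq_mul, ← mul_assoc, hx]
  simpa using main 1

/-- `ℚ/ℤ` is divisible by `3` and contains a nonzero element killed by `3`. -/
lemma exists_divisible : ∃ (A : Type) (_ : AddCommGroup A),
    (∀ a : A, ∃ b : A, (3 : ℤ) • b = a) ∧ ∃ c : A, c ≠ 0 ∧ (3 : ℤ) • c = 0 := by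
  refine ⟨ℚ ⧸ AddSubgroup.zmultiples (1 : ℚ), inferInstance, fun a => ?_, ?_⟩
  · obtain ⟨q, rfl⟩ := QuotientAddGroup.mk_surjective a
    refine ⟨((q / 3 : ℚ) : ℚ ⧸ AddSubgroup.zmultiples (1 : ℚ)), ?_⟩
    rw [← QuotientAddGroup.mk_zsmul]
    congr 1
    simp; ring
  · refine ⟨((1 / 3 : ℚ) : ℚ ⧸ AddSubgroup.zmultiples (1 : ℚ)), ?_, ?_⟩
    · rw [Ne, QuotientAddGroup.eq_zero_iff, AddSubgroup.mem_zmultiples_iff]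
      rintro ⟨k, hk⟩
      have h1 : (3 * k : ℚ) = 1 := by
        simp at hk; linarith
      have h2 : 3 * k = 1 := by exact_mod_cast h1
      omega
    · rw [← QuotientAddGroup.mk_zsmul, QuotientAddGroup.eq_zero_iff]
      exact AddSubgroup.mem_zmultiples_iff.2 ⟨1, by norm_num⟩

/-- Consequences of the defining relations in an arbitrary commutative ring. -/
lemma relations {R : Type*} [CommRing R] (x y r d b : R) (m n : ℕ)
    (h1 : x ^ (m + 3) = 0) (h2 : y ^ (n + 3) = r * x ^ (m + 2)) (h3 : x * y = r * d * x ^ (m + 2))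
    (h4 : x ^ 2 + 3 * x + 3 + 3 * y + y ^ 2 + r * b * x ^ (m + 2) = 0) :
    y ^ (n + 4) = 0 ∧ y * (y ^ 2 + 3 * y + 3) = 0 := by
  have a1 : x ^ (m + 2) * y = 0 := by
    linear_combination x ^ (m + 1) * h3 + r * d * x ^ m * h1
  have a2 : 3 * x ^ (m + 2) = 0 := by
    linear_combination x ^ (m + 2) * h4 - (x + 3) * h1 - (3 + y) * a1
      - r * b * x ^ (m + 1) * h1
  constructor
  · linear_combination y * h2 + r * a1
  · linear_combination y * h4 - (x + 3) * h3 - r * d * h1 - r * d * a2 - r * b * a1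

theorem order_of_powers_of_Y_in_template_quotient
    (μ ν : ℕ) (β δ ρ : ℤ) (hμν : ν ≤ μ) (hν : 3 ≤ ν)
    (hβ : β = -1 ∨ β = 0 ∨ β = 1) (hδ : δ = -1 ∨ δ = 0 ∨ δ = 1)
    (hρ : ρ = -1 ∨ ρ = 0 ∨ ρ = 1) :
    ∀ l, l < ν →
      addOrderOf (Ideal.Quotient.mk (Sideal μ ν β δ ρ) (X 1 ^ (ν - l))) =
        if Even l then (if ρ = 0 then 3 ^ (l / 2) else 3 ^ ((l + 2) / 2))
        else 3 ^ ((l + 1) / 2) := by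
  obtain ⟨n, rfl⟩ := Nat.exists_eq_add_of_le' hν
  obtain ⟨m, rfl⟩ := Nat.exists_eq_add_of_le' (hν.trans hμν)
  intro l hl
  set π := Ideal.Quotient.mk (Sideal (m + 3) (n + 3) β δ ρ) with hπ
  have gen : ∀ p ∈ ({X 0 ^ (m + 3), X 1 ^ (n + 3) - C ρ * X 0 ^ (m + 3 - 1),
      X 0 * X 1 - C (ρ * δ) * X 0 ^ (m + 3 - 1),
      X 0 ^ 2 + 3 * X 0 + 3 + 3 * X 1 + X 1 ^ 2 + C (ρ * β) * X 0 ^ (m + 3 - 1)} :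
        Set (MvPolynomial (Fin 2) ℤ)), π p = 0 := fun p hp =>
    Ideal.Quotient.eq_zero_iff_mem.2 (Ideal.subset_span hp)
  have r1 := gen (X 0 ^ (m + 3)) (by simp)
  have r2 := gen (X 1 ^ (n + 3) - C ρ * X 0 ^ (m + 3 - 1)) (by simp)
  have r3 := gen (X 0 * X 1 - C (ρ * δ) * X 0 ^ (m + 3 - 1)) (by simp)
  have r4 := gen (X 0 ^ 2 + 3 * X 0 + 3 + 3 * X 1 + X 1 ^ 2 + C (ρ * β) * X 0 ^ (m + 3 - 1))
    (by simp)
  simp only [Nat.add_succ_sub_one, map_sub, map_add, map_mul, map_pow, map_ofNat] at r1 r2 r3 r4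
  obtain ⟨hy0, hy⟩ := relations (π (X 0)) (π (X 1)) (π (C ρ)) (π (C δ)) (π (C β)) m n r1
    (sub_eq_zero.1 r2) (sub_eq_zero.1 r3) r4
  obtain ⟨A, _, hdiv, c, hc0, hc⟩ := exists_divisible
  rw [map_pow]
  by_cases hρ0 : ρ = 0
  · subst hρ0
    have hz : π (X 1) ^ (n + 2 + 1) = 0 := by simpa using r2
    have hnz : π (X 1) ^ (n + 2) ≠ 0 := by
      obtain ⟨u, hu1, hu2, hu3⟩ := exists_seq hdiv (0 : A) (by simp) (m + 2)
      obtain ⟨v, hv1, hv2, hv3⟩ := exists_seq hdiv c hc (n + 2)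
      obtain ⟨φ, hφ, hφ'⟩ := exists_functional hdiv m n β δ 0 u v 0 (by simp) hu1 hu2 hu3
        (by rw [hv2 _ (by omega)]; simp) (fun i hi => hv2 i (by omega)) hv3
      rw [← map_pow, Ne, hπ, Ideal.Quotient.eq_zero_iff_mem]
      intro h
      exact hc0 (hv1.symm.trans ((hφ' (n + 1)).symm.trans (hφ _ h)))
    rw [if_pos rfl]
    split_ifs with he
    · obtain ⟨t, rfl⟩ := he
      exact addOrderOf_pow_eq hz hnz hy (by omega) _ (by omega) (by omega)
    · rw [Nat.not_even_iff_odd] at he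
      obtain ⟨t, rfl⟩ := he
      exact addOrderOf_pow_eq hz hnz hy (by omega) _ (by omega) (by omega)
  · have hnz : π (X 1) ^ (n + 3) ≠ 0 := by
      obtain ⟨u, hu1, hu2, hu3⟩ := exists_seq hdiv c hc (m + 2)
      obtain ⟨v, hv1, hv2, hv3⟩ := exists_seq hdiv (ρ • c) (by rw [smul_comm, hc, smul_zero])
        (n + 3)
      obtain ⟨φ, hφ, hφ'⟩ := exists_functional hdiv m n β δ ρ u v c hc hu1 hu2 hu3 hv1 hv2 hv3
      rw [← map_pow, Ne, hπ, Ideal.Quotient.eq_zero_iff_mem]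
      intro h
      have h0 : ρ • c = 0 := hv1.symm.trans ((hφ' (n + 2)).symm.trans (hφ _ h))
      rcases hρ with rfl | rfl | rfl
      · exact hc0 (by simpa using h0)
      · exact hρ0 rfl
      · exact hc0 (by simpa using h0)
    rw [if_neg hρ0]
    split_ifs with he
    · obtain ⟨t, rfl⟩ := he
      exact addOrderOf_pow_eq hy0 hnz hy (by omega) _ (by omega) (by omega)
    · rw [Nat.not_even_iff_odd] at he
      obtain ⟨t, rfl⟩ := he
      exact addOrderOf_pow_eq hy0 hnz hy (by omega) _ (by omega) (by omega)
end

section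
/- If μ ≥ ν ≥ 3 and ρ = 0, then the additive order of the residue class of the constant 1 in the quotient ring ℤ[X,Y]/𝔖_{μ,ν}(β,δ,0) is 3^{μ/2} if μ is even, and 3^{(μ+1)/2} if μ is odd. -/
/-!
Write `x`, `y` for the classes of `X`, `Y`. When `ρ = 0` we have `xy = 0`, so multiplying
`T(x,y) = 0` by `x` gives `x(x² + 3x + 3) = 0`, hence `3x = x³(2 + x)`: multiplication by `3` raises
the order of vanishing by two. The same holds for `y`, and `T(x,y) = 0` writes `3` as a combination
of `x²` and `y²`. Therefore `3^(j+1)` is a combination of `x^(2j+2)` and `y^(2j+2)`, which vanish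
once `2j + 2 ≥ μ ≥ ν`.

Conversely, sending `Y` to `0` maps `ℤ[X,Y]` onto `ℤ[X]/(X² + 3X + 3)`, the ring of Eisenstein
integers, with `X` going to an element of norm `3`, and `𝔖` into the ideal generated by `X^μ`.
If `n` lies in `𝔖`, taking norms gives `3^μ ∣ n²`, so `3^⌈μ/2⌉ ∣ n`.
-/

open MvPolynomial

/-- Each factor `3` can be traded for a factor `x²` in the ideal generated by `x²`. -/
lemma three_pow_mul_sq_eq_zero {R : Type*} [CommRing R] {x : R}
    (h : x * (x ^ 2 + 3 * x + 3) = 0) {m j : ℕ} (hx : x ^ m = 0) (hm : m ≤ 2 * j + 2) :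
    3 ^ j * x ^ 2 = 0 := by
  have key : ∀ j : ℕ, 3 ^ j * x ^ 2 = x ^ (2 * j + 2) * (2 + x) ^ j := by
    intro j
    induction j with
    | zero => simp
    | succ j ih =>
      have h3 : 3 * x ^ 2 = x ^ 4 * (2 + x) := by linear_combination (x - x ^ 2) * h
      calc 3 ^ (j + 1) * x ^ 2 = 3 * (3 ^ j * x ^ 2) := by ring
        _ = (3 * x ^ 2) * (x ^ (2 * j) * (2 + x) ^ j) := by rw [ih]; ring
        _ = _ := by rw [h3]; ring
  rw [key, pow_eq_zero_of_le hm hx, zero_mul]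

lemma three_pow_eq_zero {R : Type*} [CommRing R] {x y : R} (hxy : x * y = 0)
    (hT : x ^ 2 + 3 * x + 3 + 3 * y + y ^ 2 = 0) {m n j : ℕ} (hx : x ^ m = 0) (hy : y ^ n = 0)
    (hm : m ≤ 2 * j + 2) (hn : n ≤ 2 * j + 2) : (3 : R) ^ (j + 1) = 0 := by
  have hpx : x * (x ^ 2 + 3 * x + 3) = 0 := by linear_combination x * hT - (3 + y) * hxy
  have hpy : y * (y ^ 2 + 3 * y + 3) = 0 := by linear_combination y * hT - (3 + x) * hxy
  have h1 := three_pow_mul_sq_eq_zero hpx hx hm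
  have h2 := three_pow_mul_sq_eq_zero hpy hy hn
  -- `3 = -x²(1 + x(2 + x)) - y²(1 + y(2 + y))`
  linear_combination 3 ^ j * hT - (1 + 2 * x + x ^ 2) * h1 - (1 + 2 * y + y ^ 2) * h2
    + 3 ^ j * (x - 1) * hpx + 3 ^ j * (y - 1) * hpy

lemma three_pow_half_dvd {m n : ℕ} (h : 3 ^ m ∣ n ^ 2) : 3 ^ ((m + 1) / 2) ∣ n := by
  rcases Nat.even_or_odd' m with ⟨k, rfl | rfl⟩
  · rw [show (2 * k + 1) / 2 = k by omega]
    rwa [mul_comm, pow_mul, Nat.pow_dvd_pow_iff two_ne_zero] at h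
  · rw [show (2 * k + 1 + 1) / 2 = k + 1 by omega]
    have h1 : 3 ^ k ∣ n := by
      rw [← Nat.pow_dvd_pow_iff two_ne_zero, ← pow_mul, mul_comm]
      exact (pow_dvd_pow 3 (by omega)).trans h
    obtain ⟨t, rfl⟩ := h1
    have h2 : 3 ∣ t ^ 2 := by
      rw [mul_pow, ← pow_mul, pow_succ, mul_comm 2 k] at h
      exact Nat.dvd_of_mul_dvd_mul_left (by positivity) h
    rw [pow_succ]
    exact mul_dvd_mul_left _ (Nat.prime_three.dvd_of_dvd_pow h2)

/-- Evaluation at `X = ω`, `Y = 0`, with values in the Eisenstein integers `ℤ[ω]`. The generator is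
taken to satisfy `ω² = -3 - 3ω`, so that `ω + 1` is a primitive cube root of unity. -/
noncomputable def evalOmega : MvPolynomial (Fin 2) ℤ →ₐ[ℤ] QuadraticAlgebra ℤ (-3) (-3) :=
  aeval ![QuadraticAlgebra.omega, 0]

lemma Sideal_map_le {μ ν : ℕ} (β δ : ℤ) (hν : ν ≠ 0) :
    Sideal μ ν β δ 0 ≤ (Ideal.span {QuadraticAlgebra.omega ^ μ}).comap evalOmega := by
  have hω : (QuadraticAlgebra.omega : QuadraticAlgebra ℤ (-3) (-3)) ^ 2
      + 3 * QuadraticAlgebra.omega + 3 = 0 := by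
    rw [sq]
    ext <;> simp [QuadraticAlgebra.re_ofNat, QuadraticAlgebra.im_ofNat]
  rw [Sideal, Ideal.span_le]
  rintro p (rfl | rfl | rfl | rfl) <;>
    simp [evalOmega, hν, hω]

theorem order_of_one_in_template_quotient
    (μ ν : ℕ) (β δ : ℤ) (hμν : ν ≤ μ) (hν : 3 ≤ ν)
    (hβ : β = -1 ∨ β = 0 ∨ β = 1) (hδ : δ = -1 ∨ δ = 0 ∨ δ = 1) :
    addOrderOf (Ideal.Quotient.mk (Sideal μ ν β δ 0) (1 : MvPolynomial (Fin 2) ℤ)) =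
      if Even μ then 3 ^ (μ / 2) else 3 ^ ((μ + 1) / 2) := by
  have hexp : (if Even μ then 3 ^ (μ / 2) else 3 ^ ((μ + 1) / 2)) = 3 ^ ((μ + 1) / 2) := by
    split_ifs with h
    · obtain ⟨k, rfl⟩ := h
      congr 1
      omega
    · rfl
  rw [hexp]
  apply Nat.dvd_antisymm
  · apply addOrderOf_dvd_of_nsmul_eq_zero
    have hmem : ∀ p ∈ ({X 0 ^ μ, X 1 ^ ν - C 0 * X 0 ^ (μ - 1),
        X 0 * X 1 - C (0 * δ) * X 0 ^ (μ - 1),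
        X 0 ^ 2 + 3 * X 0 + 3 + 3 * X 1 + X 1 ^ 2 + C (0 * β) * X 0 ^ (μ - 1)} :
          Set (MvPolynomial (Fin 2) ℤ)), Ideal.Quotient.mk (Sideal μ ν β δ 0) p = 0 :=
      fun p hp => Ideal.Quotient.eq_zero_iff_mem.mpr (Ideal.subset_span hp)
    simp only [Set.mem_insert_iff, Set.mem_singleton_iff, forall_eq_or_imp, forall_eq, zero_mul,
      C_0, sub_zero, add_zero, map_add, map_mul, map_pow, map_ofNat] at hmem
    obtain ⟨hx, hy, hxy, hT⟩ := hmem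
    have h3 := three_pow_eq_zero (j := (μ + 1) / 2 - 1) hxy hT hx hy (by omega) (by omega)
    rw [show (μ + 1) / 2 - 1 + 1 = (μ + 1) / 2 by omega] at h3
    simp [h3]
  · set n := addOrderOf (Ideal.Quotient.mk (Sideal μ ν β δ 0) 1) with hn
    apply three_pow_half_dvd
    have h0 : Ideal.Quotient.mk (Sideal μ ν β δ 0) (n : MvPolynomial (Fin 2) ℤ) = 0 := by
      have := addOrderOf_nsmul_eq_zero (Ideal.Quotient.mk (Sideal μ ν β δ 0) 1)
      rw [← hn] at this
      simpa using this
    have h1 := Sideal_map_le β δ (by omega) (Ideal.Quotient.eq_zero_iff_mem.mp h0)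
    rw [Ideal.mem_comap, Ideal.mem_span_singleton, map_natCast] at h1
    have h2 := map_dvd QuadraticAlgebra.norm h1
    rw [map_pow] at h2
    have h3 : QuadraticAlgebra.norm (QuadraticAlgebra.omega : QuadraticAlgebra ℤ (-3) (-3)) = 3 := by
      simp [QuadraticAlgebra.norm_def]
    have h4 : QuadraticAlgebra.norm (n : QuadraticAlgebra ℤ (-3) (-3)) = (n : ℤ) ^ 2 := by
      simp [QuadraticAlgebra.norm_def, sq]
    rw [h3, h4] at h2
    exact_mod_cast h2
end
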